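/- arXiv:math/0412400 — 2 statements merged into one kernel-verified Lean document; each statement's English description precedes it below -/
import Mathlib

section
/- Let g_1,…,g_m ∈ ℝ[x_1,…,x_n] and let K = {x ∈ ℝ^n : g_j(x) ≥ 0 for j = 1,…,m}. Let f ∈ ℝ[x_1,…,x_n] be nonnegative on K. Then for every ε > 0 there exist nonnegative real scalars λ_1,…,λ_m and r(ε) ∈ ℕ such that, for every r ≥ r(ε), the polynomial f(x) + ε·θ_r(x) + ε·φ_r(z) + ∑_{j=1}^m λ_j·(g_j(x) − z_j^2)^2 in the n+m variables (x_1,…,x_n,z_1,…,z_m) is a sum of squares of real polynomials in ℝ[x,z]. -/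
open MvPolynomial MeasureTheory Filter Topology

/-- `θ_r(x) = ∑_{k=0}^r ∑_{i=1}^n x_i^{2k}/k!` as a polynomial in `ℝ[x_1,…,x_n]`. -/
noncomputable def theta (n r : ℕ) : MvPolynomial (Fin n) ℝ :=
  ∑ k ∈ Finset.range (r + 1), ∑ i : Fin n,
    C ((1 : ℝ) / (Nat.factorial k : ℝ)) * X i ^ (2 * k)

/-- A polynomial is a sum of squares if it is a finite sum of squares of polynomials. -/
def IsSOS {n : ℕ} (p : MvPolynomial (Fin n) ℝ) : Prop :=
  ∃ (k : ℕ) (q : Fin k → MvPolynomial (Fin n) ℝ), p = ∑ i, q i ^ 2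

/-!
Lasserre's approximation theorem says that `p + ε θ_r` is a sum of squares for all large `r`
whenever `p ≥ 0` on `ℝⁿ`. A polynomial whose coefficients are small relative to the weights
`(2(n+1))^k (k/2+1)!` of their degrees `k` is at most `ε θ_r` modulo sums of squares, so it suffices
that `p` lies in the closure of the sums of squares for the corresponding norm on coefficients.
That closure contains the square of every power series of exponential type, because truncations
converge in this norm.

If `u_i² + v_i² = 1` with `u_i, v_i` of exponential type, then the Bernstein polynomials of `p`,
evaluated at `u_i²`, are sums of squares of such series and converge to `p(u_1², …, u_n²)`. After an
affine change of variables the choice `u_i = (cos tx_i + sin tx_i)/√2`,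
`v_i = (cos tx_i - sin tx_i)/√2` puts `p(t⁻¹ cos tx_1 sin tx_1, …)` into the closure, and `t → 0`
gives `p` itself.

For nonnegativity on a set `{g_j ≥ 0}`, slack variables `z_j` with `g_j(x) = z_j²` turn the set
into a real variety, and since `θ_r` outgrows `f` at infinity, a compactness argument provides a
penalty `λ ∑_j (g_j(x) - z_j²)²` that makes `f + ε θ_r + λ ∑_j (g_j(x) - z_j²)²` nonnegative on
the whole space, for one fixed `r`.
-/

open scoped Nat

/-- The preorder on a commutative ring whose nonnegative elements are the sums of squares. -/
def SosLE {R : Type*} [CommRing R] (a b : R) : Prop := IsSumSq (b - a)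

local infix:50 " ≼ " => SosLE

section SumOfSquaresOrder

variable {R : Type*} [CommRing R]

lemma isSumSq_sq (a : R) : IsSumSq (a ^ 2) := (IsSquare.sq a).isSumSq

lemma isSumSq_pow_two_mul (a : R) (k : ℕ) : IsSumSq (a ^ (2 * k)) :=
  ((even_two_mul k).isSquare_pow a).isSumSq

lemma isSumSq_smul_of_nonneg [Algebra ℝ R] {t : ℝ} (ht : 0 ≤ t) {a : R} (ha : IsSumSq a) :
    IsSumSq (t • a) := by
  rw [Algebra.smul_def, ← Real.sq_sqrt ht, map_pow]
  exact (isSumSq_sq _).mul ha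

lemma isSOS_of_isSumSq {n : ℕ} {p : MvPolynomial (Fin n) ℝ} (hp : IsSumSq p) : IsSOS p := by
  induction hp with
  | zero => exact ⟨0, fun _ ↦ 0, by simp⟩
  | sq_add a _ ih =>
    obtain ⟨k, q, rfl⟩ := ih
    exact ⟨k + 1, Fin.cons a q, by simp [Fin.sum_univ_succ, sq]⟩

namespace SosLE

lemma zero_left_iff {a : R} : 0 ≼ a ↔ IsSumSq a := by rw [SosLE, sub_zero]

@[refl]
lemma refl (a : R) : a ≼ a := by
  rw [SosLE, sub_self]
  exact .zero

lemma trans {a b c : R} (hab : a ≼ b) (hbc : b ≼ c) : a ≼ c := by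
  simpa only [SosLE, sub_add_sub_cancel] using IsSumSq.add hbc hab

instance : Trans (SosLE (R := R)) SosLE SosLE := ⟨trans⟩

lemma add {a b c d : R} (hab : a ≼ b) (hcd : c ≼ d) : a + c ≼ b + d := by
  simpa only [SosLE, add_sub_add_comm] using IsSumSq.add hab hcd

lemma sum {ι : Type*} {s : Finset ι} {a b : ι → R} (h : ∀ i ∈ s, a i ≼ b i) :
    ∑ i ∈ s, a i ≼ ∑ i ∈ s, b i := by
  rw [SosLE, ← Finset.sum_sub_distrib]
  exact IsSumSq.sum h

lemma single_le_sum {ι : Type*} {s : Finset ι} {a : ι → R} (h : ∀ i ∈ s, IsSumSq (a i)) {i : ι}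
    (hi : i ∈ s) : a i ≼ ∑ j ∈ s, a j := by
  classical
  rw [SosLE, ← Finset.sum_erase_eq_sub hi]
  exact IsSumSq.sum fun j hj ↦ h j (Finset.mem_of_mem_erase hj)

lemma mul_left {a b c : R} (hc : IsSumSq c) (hab : a ≼ b) : c * a ≼ c * b := by
  rw [SosLE, ← mul_sub]
  exact hc.mul hab

lemma smul [Algebra ℝ R] {t : ℝ} (ht : 0 ≤ t) {a b : R} (hab : a ≼ b) : t • a ≼ t • b := by
  rw [SosLE, ← smul_sub]
  exact isSumSq_smul_of_nonneg ht hab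

lemma smul_right_mono [Algebra ℝ R] {s t : ℝ} (hst : s ≤ t) {a : R} (ha : IsSumSq a) :
    s • a ≼ t • a := by
  rw [SosLE, ← sub_smul]
  exact isSumSq_smul_of_nonneg (sub_nonneg.2 hst) ha

lemma isSumSq_of_le {a b : R} (ha : IsSumSq a) (hab : a ≼ b) : IsSumSq b :=
  zero_left_iff.1 ((zero_left_iff.2 ha).trans hab)

end SosLE

lemma two_mul_smul_mul_sosLE [Algebra ℝ R] (t : ℝ) (a b : R) :
    (2 * t) • (a * b) ≼ |t| • (a ^ 2 + b ^ 2) := by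
  obtain ht | ht := abs_cases t
  · have : |t| • (a ^ 2 + b ^ 2) - (2 * t) • (a * b) = |t| • (a - b) ^ 2 := by
      rw [ht.1]; simp only [Algebra.smul_def, map_mul, map_ofNat]; ring
    rw [SosLE, this]
    exact isSumSq_smul_of_nonneg (abs_nonneg t) (isSumSq_sq _)
  · have : |t| • (a ^ 2 + b ^ 2) - (2 * t) • (a * b) = |t| • (a + b) ^ 2 := by
      rw [ht.1]; simp only [Algebra.smul_def, map_mul, map_ofNat, map_neg]; ring
    rw [SosLE, this]
    exact isSumSq_smul_of_nonneg (abs_nonneg t) (isSumSq_sq _)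

lemma sq_mul_pow_two_mul_sosLE (a b : R) (s : ℕ) :
    a ^ 2 * b ^ (2 * s) ≼ a ^ (2 * (s + 1)) + b ^ (2 * (s + 1)) := by
  set G := ∑ i ∈ Finset.range s, (a ^ 2) ^ i * (b ^ 2) ^ (s - 1 - i)
  have hG : IsSumSq G := IsSumSq.sum fun i _ ↦ by
    rw [← pow_mul, ← pow_mul]
    exact (isSumSq_pow_two_mul a i).mul (isSumSq_pow_two_mul b _)
  have key : a ^ (2 * (s + 1)) + b ^ (2 * (s + 1)) - a ^ 2 * b ^ (2 * s) =
      (a ^ 2 - b ^ 2) ^ 2 * G + b ^ 2 * a ^ (2 * s) := by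
    have h := (Commute.all (a ^ 2) (b ^ 2)).geom_sum₂_mul s
    simp only [mul_add, pow_add, pow_mul]
    linear_combination (b ^ 2 - a ^ 2) * h
  rw [SosLE, key]
  exact ((isSumSq_sq _).mul hG).add ((isSumSq_sq b).mul (isSumSq_pow_two_mul a s))

end SumOfSquaresOrder

section Domination

variable {σ : Type*} [Fintype σ]

variable (σ) in
/-- The polynomial `∑_{k ≤ r} ∑_i x_i^{2k}/k!`, that is `θ_r` in variables indexed by an arbitrary
finite type. -/
noncomputable def expSq (r : ℕ) : MvPolynomial σ ℝ :=
  ∑ k ∈ Finset.range (r + 1), (k ! : ℝ)⁻¹ • psum σ ℝ (2 * k)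

lemma isSumSq_psum_two_mul (k : ℕ) : IsSumSq (psum σ ℝ (2 * k)) :=
  IsSumSq.sum fun i _ ↦ isSumSq_pow_two_mul (X i) k

lemma psum_sosLE_expSq {s r : ℕ} (h : s ≤ r) :
    psum σ ℝ (2 * s) ≼ (s ! : ℝ) • expSq σ r := by
  have hs : (s ! : ℝ)⁻¹ • psum σ ℝ (2 * s) ≼ expSq σ r :=
    SosLE.single_le_sum (a := fun k ↦ (k ! : ℝ)⁻¹ • psum σ ℝ (2 * k))
      (fun k _ ↦ isSumSq_smul_of_nonneg (by positivity) (isSumSq_psum_two_mul k))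
      (Finset.mem_range_succ_iff.2 h)
  simpa [smul_smul, s.factorial_ne_zero] using hs.smul (s !).cast_nonneg

lemma isSumSq_expSq (r : ℕ) : IsSumSq (expSq σ r) :=
  IsSumSq.sum fun k _ ↦ isSumSq_smul_of_nonneg (by positivity) (isSumSq_psum_two_mul k)

lemma expSq_sosLE_expSq {r s : ℕ} (h : r ≤ s) : expSq σ r ≼ expSq σ s := by
  rw [SosLE, expSq, expSq, ← Finset.sum_Ico_eq_sub _ (by lia)]
  exact IsSumSq.sum fun k _ ↦ isSumSq_smul_of_nonneg (by positivity) (isSumSq_psum_two_mul k)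

lemma X_sq_mul_psum_sosLE (j : σ) (s : ℕ) :
    X j ^ 2 * psum σ ℝ (2 * s) ≼ (Fintype.card σ + 1 : ℝ) • psum σ ℝ (2 * (s + 1)) := by
  have hj : (X j : MvPolynomial σ ℝ) ^ (2 * (s + 1)) ≼ psum σ ℝ (2 * (s + 1)) :=
    SosLE.single_le_sum (fun i _ ↦ isSumSq_pow_two_mul (X i) (s + 1)) (Finset.mem_univ j)
  calc X j ^ 2 * psum σ ℝ (2 * s)
      = ∑ i, X j ^ 2 * X i ^ (2 * s) := by rw [psum, Finset.mul_sum]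
    _ ≼ ∑ i, (X j ^ (2 * (s + 1)) + X i ^ (2 * (s + 1))) :=
      SosLE.sum fun i _ ↦ sq_mul_pow_two_mul_sosLE (X j) (X i) s
    _ = (Fintype.card σ : ℝ) • X j ^ (2 * (s + 1)) + psum σ ℝ (2 * (s + 1)) := by
      rw [Finset.sum_add_distrib, Finset.sum_const, Finset.card_univ, Nat.cast_smul_eq_nsmul, psum]
    _ ≼ (Fintype.card σ : ℝ) • psum σ ℝ (2 * (s + 1)) + psum σ ℝ (2 * (s + 1)) :=
      (hj.smul (Nat.cast_nonneg _)).add (.refl _)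
    _ = (Fintype.card σ + 1 : ℝ) • psum σ ℝ (2 * (s + 1)) := by rw [add_smul, one_smul]

lemma finsupp_nat_induction {ι : Type*} {P : (ι →₀ ℕ) → Prop} (zero : P 0)
    (add_single : ∀ α i, P α → P (α + Finsupp.single i 1)) (α : ι →₀ ℕ) : P α := by
  classical
  suffices h : ∀ m : Multiset ι, P (Multiset.toFinsupp m) by
    simpa only [Finsupp.toMultiset_toFinsupp] using h (Finsupp.toMultiset α)
  intro m
  induction m using Multiset.induction_on with
  | empty => simpa only [map_zero] using zero
  | cons i m ih =>
    rw [← Multiset.singleton_add, map_add, Multiset.toFinsupp_singleton, add_comm]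
    exact add_single _ i ih

lemma monomial_sq_sosLE_psum [Nonempty σ] (α : σ →₀ ℕ) :
    monomial α (1 : ℝ) ^ 2 ≼
      (Fintype.card σ + 1 : ℝ) ^ α.degree • psum σ ℝ (2 * α.degree) := by
  induction α using finsupp_nat_induction with
  | zero =>
    have hcard : (1 : ℝ) ≤ Fintype.card σ := by exact_mod_cast Fintype.card_pos
    have : (1 : ℝ) • (1 : MvPolynomial σ ℝ) ≼ (Fintype.card σ : ℝ) • 1 :=
      .smul_right_mono hcard (by simp)
    simpa [psum, Algebra.smul_def] using this
  | add_single α j ih =>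
    rw [map_add, Finsupp.degree_single]
    calc monomial (α + Finsupp.single j 1) (1 : ℝ) ^ 2
        = X j ^ 2 * monomial α (1 : ℝ) ^ 2 := by
          rw [← mul_pow, X, monomial_mul, one_mul, add_comm]
      _ ≼ X j ^ 2 * ((Fintype.card σ + 1 : ℝ) ^ α.degree • psum σ ℝ (2 * α.degree)) :=
        .mul_left (isSumSq_sq _) ih
      _ = (Fintype.card σ + 1 : ℝ) ^ α.degree • (X j ^ 2 * psum σ ℝ (2 * α.degree)) :=
        mul_smul_comm _ _ _
      _ ≼ (Fintype.card σ + 1 : ℝ) ^ α.degree •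
          ((Fintype.card σ + 1 : ℝ) • psum σ ℝ (2 * (α.degree + 1))) :=
        (X_sq_mul_psum_sosLE j α.degree).smul (by positivity)
      _ = (Fintype.card σ + 1 : ℝ) ^ (α.degree + 1) • psum σ ℝ (2 * (α.degree + 1)) := by
        rw [smul_smul, pow_succ]

lemma exists_add_eq_and_degree_balanced {ι : Type*} (α : ι →₀ ℕ) :
    ∃ β γ : ι →₀ ℕ, β + γ = α ∧ (γ.degree = β.degree ∨ γ.degree = β.degree + 1) := by
  induction α using finsupp_nat_induction with
  | zero => exact ⟨0, 0, add_zero 0, .inl rfl⟩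
  | add_single α j ih =>
    obtain ⟨β, γ, rfl, h | h⟩ := ih
    · refine ⟨β, γ + Finsupp.single j 1, (add_assoc β γ _).symm, .inr ?_⟩
      rw [map_add, h, Finsupp.degree_single]
    · refine ⟨β + Finsupp.single j 1, γ, add_right_comm β _ γ, .inl ?_⟩
      rw [map_add, h, Finsupp.degree_single]

lemma monomial_sq_sosLE_expSq [Nonempty σ] (β : σ →₀ ℕ) {d s r : ℕ} (hd : β.degree ≤ d)
    (hs : β.degree ≤ s) (hr : s ≤ r) :
    monomial β (1 : ℝ) ^ 2 ≼ ((Fintype.card σ + 1 : ℝ) ^ d * s !) • expSq σ r :=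
  calc monomial β (1 : ℝ) ^ 2
      ≼ (Fintype.card σ + 1 : ℝ) ^ β.degree • psum σ ℝ (2 * β.degree) := monomial_sq_sosLE_psum β
    _ ≼ (Fintype.card σ + 1 : ℝ) ^ β.degree • ((β.degree ! : ℝ) • expSq σ r) :=
      (psum_sosLE_expSq (hs.trans hr)).smul (by positivity)
    _ = ((Fintype.card σ + 1 : ℝ) ^ β.degree * β.degree !) • expSq σ r := smul_smul _ _ _
    _ ≼ ((Fintype.card σ + 1 : ℝ) ^ d * s !) • expSq σ r := by
      refine .smul_right_mono ?_ (isSumSq_expSq r)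
      gcongr
      linarith [Nat.cast_nonneg (α := ℝ) (Fintype.card σ)]

lemma monomial_sosLE_expSq [Nonempty σ] (α : σ →₀ ℕ) (e : ℝ) {r : ℕ}
    (hr : α.degree / 2 + 1 ≤ r) :
    monomial α e ≼
      (|e| * ((Fintype.card σ + 1 : ℝ) ^ α.degree * (α.degree / 2 + 1)!)) • expSq σ r := by
  obtain ⟨β, γ, rfl, h⟩ := exists_add_eq_and_degree_balanced α
  have hdeg : (β + γ).degree = β.degree + γ.degree := map_add _ _ _
  have hβ := monomial_sq_sosLE_expSq β (d := (β + γ).degree) (by lia) (by lia) hr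
  have hγ := monomial_sq_sosLE_expSq γ (d := (β + γ).degree) (by lia) (by lia) hr
  set W : ℝ := (Fintype.card σ + 1 : ℝ) ^ (β + γ).degree * ((β + γ).degree / 2 + 1)!
  calc monomial (β + γ) e
      = (2 * (e / 2)) • (monomial β (1 : ℝ) * monomial γ 1) := by
        rw [monomial_mul, smul_monomial, mul_one, smul_eq_mul, mul_one,
          mul_div_cancel₀ e two_ne_zero]
    _ ≼ |e / 2| • (monomial β (1 : ℝ) ^ 2 + monomial γ 1 ^ 2) := two_mul_smul_mul_sosLE _ _ _
    _ ≼ |e / 2| • (W • expSq σ r + W • expSq σ r) := (hβ.add hγ).smul (abs_nonneg _)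
    _ = (|e| * W) • expSq σ r := by
      rw [← add_smul, smul_smul, abs_div, abs_two]
      congr 1
      ring

lemma sum_half_pow_degree_le (s : Finset (σ →₀ ℕ)) :
    ∑ α ∈ s, (1 / 2 : ℝ) ^ α.degree ≤ 2 ^ Fintype.card σ := by
  classical
  set D := s.sup Finsupp.degree + 1
  have hbox : s.map Finsupp.equivFunOnFinite.toEmbedding ⊆
      Fintype.piFinset fun _ ↦ Finset.range D := fun x hx ↦ by
    obtain ⟨α, hα, rfl⟩ := Finset.mem_map.1 hx
    refine Fintype.mem_piFinset.2 fun i ↦ Finset.mem_range_succ_iff.2 ?_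
    exact (Finsupp.le_degree i α).trans (Finset.le_sup (f := Finsupp.degree) hα)
  calc ∑ α ∈ s, (1 / 2 : ℝ) ^ α.degree
      = ∑ x ∈ s.map Finsupp.equivFunOnFinite.toEmbedding, ∏ i, (1 / 2 : ℝ) ^ x i := by
        simp [Finset.prod_pow_eq_pow_sum, Finsupp.degree_eq_sum]
    _ ≤ ∑ x ∈ Fintype.piFinset fun _ ↦ Finset.range D, ∏ i, (1 / 2 : ℝ) ^ x i :=
        Finset.sum_le_sum_of_subset_of_nonneg hbox fun _ _ _ ↦ by positivity
    _ = ∏ _ : σ, ∑ k ∈ Finset.range D, (1 / 2 : ℝ) ^ k := (Finset.prod_univ_sum _ _).symm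
    _ ≤ ∏ _ : σ, (2 : ℝ) :=
        Finset.prod_le_prod (fun _ _ ↦ by positivity) fun _ _ ↦ sum_geometric_two_le D
    _ = 2 ^ Fintype.card σ := by rw [Finset.prod_const, Finset.card_univ]

variable (σ) in
/-- The weight of degree `k` in the coefficient norm of `CoeffClose`. It is `2 ^ k` times the
constant with which `expSq` dominates a monomial of degree `k`, so that the errors of all monomials
can be summed. -/
noncomputable def coeffWeight (k : ℕ) : ℝ :=
  (2 * (Fintype.card σ + 1)) ^ k * (k / 2 + 1)!

lemma coeffWeight_nonneg (k : ℕ) : 0 ≤ coeffWeight σ k := by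
  unfold coeffWeight
  positivity

/-- Two power series are `δ`-close if their distance in the weighted supremum norm of coefficients
is at most `δ`. -/
def CoeffClose (δ : ℝ) (h h' : MvPowerSeries σ ℝ) : Prop :=
  ∀ α, |MvPowerSeries.coeff α h - MvPowerSeries.coeff α h'| * coeffWeight σ α.degree ≤ δ

lemma CoeffClose.symm {δ : ℝ} {h h' : MvPowerSeries σ ℝ} (H : CoeffClose δ h h') :
    CoeffClose δ h' h := fun α ↦ by
  rw [abs_sub_comm]
  exact H α

lemma sub_sosLE_of_coeffClose [Nonempty σ] {δ : ℝ} {p q : MvPolynomial σ ℝ}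
    (h : CoeffClose δ (p : MvPowerSeries σ ℝ) q) {r : ℕ}
    (hr : (p - q).totalDegree / 2 + 1 ≤ r) :
    p - q ≼ (δ * 2 ^ Fintype.card σ) • expSq σ r := by
  have hα (α : σ →₀ ℕ) (hα : α ∈ (p - q).support) :
      monomial α (coeff α (p - q)) ≼ (δ * (1 / 2) ^ α.degree) • expSq σ r := by
    have hdeg : α.degree ≤ (p - q).totalDegree := le_totalDegree hα
    refine (monomial_sosLE_expSq α _ (by lia)).trans (.smul_right_mono ?_ (isSumSq_expSq r))
    have hδ := h α
    rw [MvPolynomial.coeff_coe, MvPolynomial.coeff_coe, ← coeff_sub, coeffWeight, mul_pow] at hδ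
    rw [one_div, inv_pow, ← div_eq_mul_inv, le_div_iff₀ (by positivity)]
    linarith
  have hδ : 0 ≤ δ := (mul_nonneg (abs_nonneg _) (coeffWeight_nonneg _)).trans (h 0)
  calc p - q = ∑ α ∈ (p - q).support, monomial α (coeff α (p - q)) :=
      (support_sum_monomial_coeff _).symm
    _ ≼ ∑ α ∈ (p - q).support, (δ * (1 / 2) ^ α.degree) • expSq σ r := SosLE.sum hα
    _ = (δ * ∑ α ∈ (p - q).support, (1 / 2) ^ α.degree) • expSq σ r := by
      rw [← Finset.sum_smul, Finset.mul_sum]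
    _ ≼ (δ * 2 ^ Fintype.card σ) • expSq σ r :=
      .smul_right_mono (by gcongr; exact sum_half_pow_degree_le _) (isSumSq_expSq r)

end Domination

section ExponentialType

variable {σ : Type*}

lemma card_finsuppAntidiagonal_le [DecidableEq σ] (α : σ →₀ ℕ) :
    (Finset.HasAntidiagonal.antidiagonal α).card ≤ 2 ^ α.degree := by
  calc (Finset.HasAntidiagonal.antidiagonal α).card
      ≤ (Finsupp.toMultiset α).antidiagonal.card := by
        rw [← Multiset.card_map (Prod.map Multiset.toFinsupp Multiset.toFinsupp)]
        exact Multiset.toFinset_card_le _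
    _ = 2 ^ α.degree := by
        rw [Multiset.card_antidiagonal, Finsupp.card_toMultiset]
        rfl

lemma pow_div_factorial_mul_le {c : ℝ} (hc : 0 ≤ c) (a b : ℕ) :
    c ^ a / a ! * (c ^ b / b !) ≤ (2 * c) ^ (a + b) / (a + b)! := by
  have hchoose : ((a + b)! : ℝ) = (a + b).choose b * (a ! * b !) := by
    rw [← mul_assoc]
    exact_mod_cast (Nat.add_choose_mul_factorial_mul_factorial a b).symm
  have h2 : ((a + b).choose b : ℝ) ≤ 2 ^ (a + b) := by exact_mod_cast Nat.choose_le_two_pow _ _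
  rw [div_mul_div_comm, ← pow_add, mul_pow, div_le_div_iff₀ (by positivity) (by positivity),
    hchoose]
  calc c ^ (a + b) * ((a + b).choose b * (a ! * b !))
      ≤ c ^ (a + b) * (2 ^ (a + b) * (a ! * b !)) := by gcongr
    _ = 2 ^ (a + b) * c ^ (a + b) * (a ! * b !) := by ring

/-- The coefficient estimate satisfied by the Taylor series at `0` of an entire function of
exponential type: the coefficient of `x^α` is at most `B c^|α| / |α|!`. -/
def HasExpBound (B c : ℝ) (h : MvPowerSeries σ ℝ) : Prop :=
  ∀ α, |MvPowerSeries.coeff α h| ≤ B * (c ^ α.degree / α.degree !)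

namespace HasExpBound

variable {B B' c c' : ℝ} {h h' : MvPowerSeries σ ℝ}

lemma nonneg (hh : HasExpBound B c h) : 0 ≤ B := by
  simpa using (abs_nonneg _).trans (hh 0)

lemma mono (hh : HasExpBound B c h) (hB : B ≤ B') (hc0 : 0 ≤ c) (hc : c ≤ c') :
    HasExpBound B' c' h := fun α ↦
  (hh α).trans (mul_le_mul hB (by gcongr) (by positivity) (hh.nonneg.trans hB))

lemma add (hh : HasExpBound B c h) (hh' : HasExpBound B' c' h') (hc : 0 ≤ c) (hc' : 0 ≤ c') :
    HasExpBound (B + B') (max c c') (h + h') := fun α ↦ by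
  rw [map_add, add_mul]
  exact (abs_add_le _ _).trans
    (add_le_add (hh.mono le_rfl hc (le_max_left _ _) α) (hh'.mono le_rfl hc' (le_max_right _ _) α))

lemma smul (hh : HasExpBound B c h) (a : ℝ) : HasExpBound (|a| * B) c (a • h) := fun α ↦ by
  rw [MvPowerSeries.coeff_smul, abs_mul, mul_assoc]
  exact mul_le_mul_of_nonneg_left (hh α) (abs_nonneg a)

lemma mul_of_same_type (hh : HasExpBound B c h) (hh' : HasExpBound B' c h') (hc : 0 ≤ c) :
    HasExpBound (B * B') (4 * c) (h * h') := fun α ↦ by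
  classical
  have hB := hh.nonneg
  have hB' := hh'.nonneg
  have key (p) (hp : p ∈ Finset.HasAntidiagonal.antidiagonal α) :
      |MvPowerSeries.coeff p.1 h * MvPowerSeries.coeff p.2 h'| ≤
        B * B' * ((2 * c) ^ α.degree / α.degree !) := by
    obtain rfl := Finset.HasAntidiagonal.mem_antidiagonal.1 hp
    rw [abs_mul, map_add]
    calc _ ≤ B * (c ^ p.1.degree / p.1.degree !) * (B' * (c ^ p.2.degree / p.2.degree !)) :=
          mul_le_mul (hh _) (hh' _) (abs_nonneg _) (by positivity)
      _ = B * B' * (c ^ p.1.degree / p.1.degree ! * (c ^ p.2.degree / p.2.degree !)) := by ring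
      _ ≤ _ := by gcongr; exact pow_div_factorial_mul_le hc _ _
  rw [MvPowerSeries.coeff_mul]
  calc _ ≤ (Finset.HasAntidiagonal.antidiagonal α).card •
          (B * B' * ((2 * c) ^ α.degree / α.degree !)) :=
        (Finset.abs_sum_le_sum_abs _ _).trans (Finset.sum_le_card_nsmul _ _ _ key)
    _ ≤ 2 ^ α.degree * (B * B' * ((2 * c) ^ α.degree / α.degree !)) := by
        rw [nsmul_eq_mul]
        gcongr
        exact_mod_cast card_finsuppAntidiagonal_le α
    _ = B * B' * ((4 * c) ^ α.degree / α.degree !) := by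
        rw [show 4 * c = 2 * (2 * c) by ring, mul_pow 2 (2 * c)]
        ring

lemma mul (hh : HasExpBound B c h) (hh' : HasExpBound B' c' h') (hc : 0 ≤ c) (hc' : 0 ≤ c') :
    HasExpBound (B * B') (4 * max c c') (h * h') :=
  (hh.mono le_rfl hc (le_max_left _ _)).mul_of_same_type (hh'.mono le_rfl hc' (le_max_right _ _))
    (le_max_of_le_left hc)

lemma one : HasExpBound 1 1 (1 : MvPowerSeries σ ℝ) := fun α ↦ by
  classical
  rw [MvPowerSeries.coeff_one]
  split_ifs with h
  · simp [h]
  · simp only [abs_zero]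
    positivity

end HasExpBound

variable (σ) in
/-- The algebra of power series of exponential type. -/
def expType : Subalgebra ℝ (MvPowerSeries σ ℝ) where
  carrier := {h | ∃ B c, 0 ≤ c ∧ HasExpBound B c h}
  add_mem' := fun ⟨_, _, hc, hh⟩ ⟨_, _, hc', hh'⟩ ↦
    ⟨_, _, le_max_of_le_left hc, hh.add hh' hc hc'⟩
  mul_mem' := fun ⟨_, c, hc, hh⟩ ⟨_, c', hc', hh'⟩ ↦
    ⟨_, 4 * max c c', by positivity, hh.mul hh' hc hc'⟩
  algebraMap_mem' a := by
    rw [Algebra.algebraMap_eq_smul_one]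
    exact ⟨_, _, zero_le_one, HasExpBound.one.smul a⟩

/-- Convergence of power series of exponential type: coefficientwise convergence together with a
uniform bound on the type. -/
structure TendstoExpType {ι : Type*} (h : ι → MvPowerSeries σ ℝ) (l : Filter ι)
    (h₀ : MvPowerSeries σ ℝ) : Prop where
  bound : ∃ B c, 0 ≤ c ∧ ∀ᶠ n in l, HasExpBound B c (h n)
  tendsto_coeff : ∀ α, Tendsto (fun n ↦ MvPowerSeries.coeff α (h n)) l
    (𝓝 (MvPowerSeries.coeff α h₀))

namespace TendstoExpType

variable {ι : Type*} {l : Filter ι} {h h' : ι → MvPowerSeries σ ℝ} {h₀ h₀' : MvPowerSeries σ ℝ}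

lemma const (hh : h₀ ∈ expType σ) : TendstoExpType (fun _ ↦ h₀) l h₀ where
  bound := let ⟨B, c, hc, hB⟩ := hh; ⟨B, c, hc, .of_forall fun _ ↦ hB⟩
  tendsto_coeff _ := tendsto_const_nhds

lemma mono_left {l' : Filter ι} (H : TendstoExpType h l h₀) (hl : l' ≤ l) :
    TendstoExpType h l' h₀ where
  bound := let ⟨B, c, hc, hB⟩ := H.bound; ⟨B, c, hc, hB.filter_mono hl⟩
  tendsto_coeff α := (H.tendsto_coeff α).mono_left hl

lemma add (H : TendstoExpType h l h₀) (H' : TendstoExpType h' l h₀') :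
    TendstoExpType (fun n ↦ h n + h' n) l (h₀ + h₀') where
  bound := by
    obtain ⟨B, c, hc, hB⟩ := H.bound
    obtain ⟨B', c', hc', hB'⟩ := H'.bound
    exact ⟨B + B', max c c', le_max_of_le_left hc, (hB.and hB').mono fun n hn ↦
      hn.1.add hn.2 hc hc'⟩
  tendsto_coeff α := by simpa only [map_add] using (H.tendsto_coeff α).add (H'.tendsto_coeff α)

lemma mul (H : TendstoExpType h l h₀) (H' : TendstoExpType h' l h₀') :
    TendstoExpType (fun n ↦ h n * h' n) l (h₀ * h₀') where
  bound := by
    obtain ⟨B, c, hc, hB⟩ := H.bound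
    obtain ⟨B', c', hc', hB'⟩ := H'.bound
    exact ⟨B * B', 4 * max c c', by positivity, (hB.and hB').mono fun n hn ↦
      hn.1.mul hn.2 hc hc'⟩
  tendsto_coeff α := by
    classical
    simp only [MvPowerSeries.coeff_mul]
    exact tendsto_finsetSum _ fun p _ ↦ (H.tendsto_coeff p.1).mul (H'.tendsto_coeff p.2)

lemma smul {a : ι → ℝ} {a₀ : ℝ} (ha : Tendsto a l (𝓝 a₀)) (H : TendstoExpType h l h₀) :
    TendstoExpType (fun n ↦ a n • h n) l (a₀ • h₀) where
  bound := by
    obtain ⟨B, c, hc, hB⟩ := H.bound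
    refine ⟨(|a₀| + 1) * B, c, hc, ?_⟩
    filter_upwards [hB, ha.abs.eventually_le_const (lt_add_one |a₀|)] with n hn han
    exact (hn.smul (a n)).mono (mul_le_mul_of_nonneg_right han hn.nonneg) hc le_rfl
  tendsto_coeff α := by simpa only [MvPowerSeries.coeff_smul] using ha.mul (H.tendsto_coeff α)

lemma sum {κ : Type*} {s : Finset κ} {h : κ → ι → MvPowerSeries σ ℝ} {h₀ : κ → MvPowerSeries σ ℝ}
    (H : ∀ i ∈ s, TendstoExpType (h i) l (h₀ i)) :
    TendstoExpType (fun n ↦ ∑ i ∈ s, h i n) l (∑ i ∈ s, h₀ i) := by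
  classical
  induction s using Finset.induction_on with
  | empty => simpa only [Finset.sum_empty] using const (zero_mem _)
  | insert i s hi ih =>
    simp only [Finset.sum_insert hi]
    exact (H i (Finset.mem_insert_self i s)).add
      (ih fun j hj ↦ H j (Finset.mem_insert_of_mem hj))

lemma prod {κ : Type*} {s : Finset κ} {h : κ → ι → MvPowerSeries σ ℝ} {h₀ : κ → MvPowerSeries σ ℝ}
    (H : ∀ i ∈ s, TendstoExpType (h i) l (h₀ i)) :
    TendstoExpType (fun n ↦ ∏ i ∈ s, h i n) l (∏ i ∈ s, h₀ i) := by
  classical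
  induction s using Finset.induction_on with
  | empty => simpa only [Finset.prod_empty] using const (one_mem _)
  | insert i s hi ih =>
    simp only [Finset.prod_insert hi]
    exact (H i (Finset.mem_insert_self i s)).mul
      (ih fun j hj ↦ H j (Finset.mem_insert_of_mem hj))

lemma aeval {τ : Type*} {h : τ → ι → MvPowerSeries σ ℝ} {h₀ : τ → MvPowerSeries σ ℝ}
    (H : ∀ i, TendstoExpType (h i) l (h₀ i)) (p : MvPolynomial τ ℝ) :
    TendstoExpType (fun n ↦ MvPolynomial.aeval (fun i ↦ h i n) p) l (MvPolynomial.aeval h₀ p) := by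
  induction p using MvPolynomial.induction_on with
  | C a => simpa only [aeval_C] using const ((expType σ).algebraMap_mem a)
  | add p q hp hq => simpa only [map_add] using hp.add hq
  | mul_X p i hp => simpa only [map_mul, aeval_X] using hp.mul (H i)

lemma truncTotal [Finite σ] (hh : h₀ ∈ expType σ) :
    TendstoExpType (fun n ↦ (h₀.truncTotal n : MvPowerSeries σ ℝ)) atTop h₀ where
  bound := by
    obtain ⟨B, c, hc, hB⟩ := hh
    refine ⟨B, c, hc, .of_forall fun n α ↦ ?_⟩
    have hα := hB α
    rw [MvPolynomial.coeff_coe, MvPowerSeries.coeff_truncTotal_eq_ite]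
    split_ifs
    · exact hα
    · exact abs_zero.trans_le ((abs_nonneg _).trans hα)
  tendsto_coeff α := tendsto_const_nhds.congr' <| by
    filter_upwards [eventually_gt_atTop α.degree] with n hn
    rw [MvPolynomial.coeff_coe, MvPowerSeries.coeff_truncTotal _ hn]

lemma of_add_one {h : ℕ → MvPowerSeries σ ℝ} (H : TendstoExpType (fun n ↦ h (n + 1)) atTop h₀) :
    TendstoExpType h atTop h₀ where
  bound := by
    rw [← map_add_atTop_eq_nat 1]
    exact H.bound
  tendsto_coeff α := by
    rw [← map_add_atTop_eq_nat 1]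
    exact H.tendsto_coeff α

end TendstoExpType

variable [Fintype σ]

lemma tendsto_coeffWeight_mul_pow_div_factorial {c : ℝ} (hc : 0 ≤ c) :
    Tendsto (fun k ↦ c ^ k / k ! * coeffWeight σ k) atTop (𝓝 0) := by
  set b : ℝ := max 1 (2 * (Fintype.card σ + 1) * c)
  have hdiff : Tendsto (fun k : ℕ ↦ k - (k / 2 + 1)) atTop atTop :=
    tendsto_atTop.2 fun a ↦ (eventually_ge_atTop (2 * a + 2)).mono fun k hk ↦ by lia
  have hlim : Tendsto (fun k : ℕ ↦ b ^ 2 * ((b ^ 2) ^ (k - (k / 2 + 1)) / (k - (k / 2 + 1))!))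
      atTop (𝓝 0) := by
    simpa only [mul_zero, Function.comp_def] using
      ((FloorSemiring.tendsto_pow_div_factorial_atTop (b ^ 2)).const_mul (b ^ 2)).comp hdiff
  refine squeeze_zero'
    (.of_forall fun k ↦ mul_nonneg (by positivity) (coeffWeight_nonneg k)) ?_ hlim
  filter_upwards [eventually_ge_atTop 1] with k hk
  have hfac : ((k / 2 + 1)! : ℝ) * (k - (k / 2 + 1))! ≤ k ! := by
    exact_mod_cast Nat.le_of_dvd k.factorial_pos
      (Nat.factorial_mul_factorial_dvd_factorial (by lia))
  have hpow : (2 * (Fintype.card σ + 1) * c) ^ k ≤ b ^ 2 * (b ^ 2) ^ (k - (k / 2 + 1)) :=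
    calc (2 * (Fintype.card σ + 1) * c) ^ k ≤ b ^ k := by gcongr; exact le_max_right _ _
      _ ≤ b ^ (2 + 2 * (k - (k / 2 + 1))) := pow_le_pow_right₀ (le_max_left _ _) (by lia)
      _ = b ^ 2 * (b ^ 2) ^ (k - (k / 2 + 1)) := by rw [pow_add, pow_mul]
  calc c ^ k / k ! * coeffWeight σ k
      = (2 * (Fintype.card σ + 1) * c) ^ k * (k / 2 + 1)! / k ! := by
        rw [coeffWeight, mul_pow _ c]; ring
    _ ≤ b ^ 2 * (b ^ 2) ^ (k - (k / 2 + 1)) / (k - (k / 2 + 1))! := by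
        rw [div_le_div_iff₀ (by positivity) (by positivity), mul_assoc]
        gcongr
    _ = b ^ 2 * ((b ^ 2) ^ (k - (k / 2 + 1)) / (k - (k / 2 + 1))!) := mul_div_assoc _ _ _

lemma TendstoExpType.eventually_coeffClose {ι : Type*} {l : Filter ι} [l.NeBot]
    {h : ι → MvPowerSeries σ ℝ} {h₀ : MvPowerSeries σ ℝ} (H : TendstoExpType h l h₀) {δ : ℝ}
    (hδ : 0 < δ) : ∀ᶠ n in l, CoeffClose δ h₀ (h n) := by
  obtain ⟨B, c, hc, hB⟩ := H.bound
  have hB₀ : HasExpBound B c h₀ := fun α ↦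
    le_of_tendsto (H.tendsto_coeff α).abs (hB.mono fun n hn ↦ hn α)
  have htail : ∀ᶠ k in atTop, 2 * B * (c ^ k / k ! * coeffWeight σ k) ≤ δ := by
    refine ((tendsto_coeffWeight_mul_pow_div_factorial hc).const_mul (2 * B)).eventually_le_const ?_
    rwa [mul_zero]
  obtain ⟨D, hD⟩ := eventually_atTop.1 htail
  have hlow : ∀ᶠ n in l, ∀ α ∈ {α : σ →₀ ℕ | α.degree ≤ D},
      |MvPowerSeries.coeff α h₀ - MvPowerSeries.coeff α (h n)| * coeffWeight σ α.degree ≤ δ := by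
    refine (eventually_all_finite (Finsupp.finite_of_degree_le D)).2 fun α _ ↦ ?_
    have hlim := (((H.tendsto_coeff α).const_sub (MvPowerSeries.coeff α h₀)).abs).mul_const
      (coeffWeight σ α.degree)
    rw [sub_self, abs_zero, zero_mul] at hlim
    exact hlim.eventually_le_const hδ
  filter_upwards [hB, hlow] with n hn hlow α
  obtain hα | hα := le_total α.degree D
  · exact hlow α hα
  · refine le_trans ?_ (hD _ hα)
    rw [← mul_assoc]
    gcongr
    · exact coeffWeight_nonneg _
    · linarith [abs_sub (MvPowerSeries.coeff α h₀) (MvPowerSeries.coeff α (h n)), hn α, hB₀ α]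

/-- A power series lies in the closure, for the weighted coefficient norm of `CoeffClose`, of the
cone of sums of squares of polynomials. -/
def IsSosLimit (h : MvPowerSeries σ ℝ) : Prop :=
  ∀ δ > 0, ∃ q : MvPolynomial σ ℝ, IsSumSq q ∧ CoeffClose δ h q

namespace IsSosLimit

lemma of_coeffClose {h : MvPowerSeries σ ℝ}
    (H : ∀ δ > 0, ∃ h', IsSosLimit h' ∧ CoeffClose δ h h') : IsSosLimit h := fun δ hδ ↦ by
  obtain ⟨h', hh', hclose⟩ := H _ (half_pos hδ)
  obtain ⟨q, hq, hclose'⟩ := hh' _ (half_pos hδ)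
  refine ⟨q, hq, fun α ↦ ?_⟩
  calc |MvPowerSeries.coeff α h - MvPowerSeries.coeff α (q : MvPowerSeries σ ℝ)|
          * coeffWeight σ α.degree
      ≤ _ := mul_le_mul_of_nonneg_right (abs_sub_le _ (MvPowerSeries.coeff α h') _)
        (coeffWeight_nonneg _)
    _ ≤ δ / 2 + δ / 2 := by rw [add_mul]; exact add_le_add (hclose α) (hclose' α)
    _ = δ := add_halves δ

lemma of_isSumSq {q : MvPolynomial σ ℝ} (hq : IsSumSq q) :
    IsSosLimit (q : MvPowerSeries σ ℝ) := fun δ hδ ↦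
  ⟨q, hq, fun α ↦ by rw [sub_self, abs_zero, zero_mul]; exact hδ.le⟩

lemma add {h h' : MvPowerSeries σ ℝ} (H : IsSosLimit h) (H' : IsSosLimit h') :
    IsSosLimit (h + h') := fun δ hδ ↦ by
  obtain ⟨q, hq, hclose⟩ := H _ (half_pos hδ)
  obtain ⟨q', hq', hclose'⟩ := H' _ (half_pos hδ)
  refine ⟨q + q', hq.add hq', fun α ↦ ?_⟩
  rw [coe_add, map_add, map_add, add_sub_add_comm]
  calc _ ≤ _ := mul_le_mul_of_nonneg_right (abs_add_le _ _) (coeffWeight_nonneg _)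
    _ ≤ δ / 2 + δ / 2 := by rw [add_mul]; exact add_le_add (hclose α) (hclose' α)
    _ = δ := add_halves δ

lemma sum {κ : Type*} {s : Finset κ} {h : κ → MvPowerSeries σ ℝ}
    (H : ∀ i ∈ s, IsSosLimit (h i)) : IsSosLimit (∑ i ∈ s, h i) :=
  Finset.sum_induction h IsSosLimit (fun _ _ ↦ add)
    (by simpa using of_isSumSq (.zero (R := MvPolynomial σ ℝ))) H

lemma of_tendsto {ι : Type*} {l : Filter ι} [l.NeBot] {h : ι → MvPowerSeries σ ℝ}
    {h₀ : MvPowerSeries σ ℝ} (H : TendstoExpType h l h₀) (hh : ∀ᶠ n in l, IsSosLimit (h n)) :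
    IsSosLimit h₀ := of_coeffClose fun _ hδ ↦
  let ⟨n, hn, hclose⟩ := (hh.and (H.eventually_coeffClose hδ)).exists
  ⟨h n, hn, hclose⟩

lemma sq {h : MvPowerSeries σ ℝ} (hh : h ∈ expType σ) : IsSosLimit (h ^ 2) := by
  have htrunc := TendstoExpType.truncTotal hh
  rw [pow_two]
  refine of_tendsto (htrunc.mul htrunc) (.of_forall fun n ↦ ?_)
  rw [← MvPolynomial.coe_mul]
  exact of_isSumSq (.mul_self _)

end IsSosLimit

end ExponentialType

section Bernstein

variable {R : Type*} [CommRing R] [Algebra ℝ R]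

/-- The expectation `∑_a f(a) C(M,a) Y^a (1-Y)^(M-a)` of `f` under the binomial law with `M` trials
and formal success probability `Y`. -/
noncomputable def binomialMean (Y : R) (M : ℕ) (f : ℕ → ℝ) : R :=
  ∑ a ∈ Finset.range (M + 1), f a • Polynomial.aeval Y (bernsteinPolynomial ℝ M a)

lemma binomialMean_one (Y : R) (M : ℕ) : binomialMean Y M (fun _ ↦ 1) = 1 := by
  simp only [binomialMean, one_smul]
  rw [← map_sum, bernsteinPolynomial.sum, map_one]

lemma binomialMean_add (Y : R) (M : ℕ) (f g : ℕ → ℝ) :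
    binomialMean Y M (fun a ↦ f a + g a) = binomialMean Y M f + binomialMean Y M g := by
  simp only [binomialMean, add_smul, Finset.sum_add_distrib]

lemma binomialMean_const_mul (Y : R) (M : ℕ) (t : ℝ) (f : ℕ → ℝ) :
    binomialMean Y M (fun a ↦ t * f a) = t • binomialMean Y M f := by
  simp only [binomialMean, mul_smul, Finset.smul_sum]

lemma succ_smul_bernsteinPolynomial_succ_succ (M a : ℕ) :
    (a + 1 : ℝ) • bernsteinPolynomial ℝ (M + 1) (a + 1) =
      (M + 1 : ℝ) • (Polynomial.X * bernsteinPolynomial ℝ M a) := by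
  have h : ((M + 1 : Polynomial ℝ) * M.choose a) = (M + 1).choose (a + 1) * (a + 1) := by
    exact_mod_cast Nat.add_one_mul_choose_eq M a
  simp only [bernsteinPolynomial, Polynomial.smul_eq_C_mul, Nat.add_sub_add_right, map_add,
    map_natCast, map_one]
  linear_combination (-(Polynomial.X ^ (a + 1) * (1 - Polynomial.X) ^ (M - a))) * h

lemma binomialMean_succ_cast_mul (Y : R) (M : ℕ) (f : ℕ → ℝ) :
    binomialMean Y (M + 1) (fun a ↦ a * f a) =
      (M + 1 : ℝ) • (Y * binomialMean Y M fun a ↦ f (a + 1)) := by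
  have key (a : ℕ) : (((a + 1 : ℕ) : ℝ) * f (a + 1)) •
      Polynomial.aeval Y (bernsteinPolynomial ℝ (M + 1) (a + 1)) =
      (M + 1 : ℝ) • (Y * f (a + 1) • Polynomial.aeval Y (bernsteinPolynomial ℝ M a)) := by
    have h := congrArg (Polynomial.aeval Y) (succ_smul_bernsteinPolynomial_succ_succ M a)
    rw [map_smul, map_smul, map_mul, Polynomial.aeval_X] at h
    rw [Nat.cast_succ, mul_comm, mul_smul, h, mul_smul_comm, smul_comm]
  simp only [binomialMean, Finset.sum_range_succ' _ (M + 1), key, Nat.cast_zero, zero_mul,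
    zero_smul, add_zero, Finset.mul_sum, Finset.smul_sum]

/-- The Bernstein approximation `∑_a p(a/M) ∏_i C(M,a_i) Y_i^{a_i} (1-Y_i)^{M-a_i}` of order `M`
to `p(Y)`. -/
noncomputable def bernsteinApprox {τ : Type*} [Fintype τ] [DecidableEq τ] (Y : τ → R) (M : ℕ)
    (p : MvPolynomial τ ℝ) : R :=
  ∑ a ∈ Fintype.piFinset fun _ : τ ↦ Finset.range (M + 1),
    eval (fun i ↦ (a i / M : ℝ)) p • ∏ i, Polynomial.aeval (Y i) (bernsteinPolynomial ℝ M (a i))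

lemma bernsteinApprox_eq_sum_prod_binomialMean {τ : Type*} [Fintype τ] [DecidableEq τ] (Y : τ → R)
    (M : ℕ) (p : MvPolynomial τ ℝ) :
    bernsteinApprox Y M p =
      ∑ d ∈ p.support, coeff d p • ∏ i, binomialMean (Y i) M fun a ↦ (a / M : ℝ) ^ d i := by
  simp only [bernsteinApprox, eval_eq', Finset.sum_smul]
  rw [Finset.sum_comm]
  refine Finset.sum_congr rfl fun d _ ↦ ?_
  simp only [binomialMean, Finset.prod_univ_sum, Finset.smul_sum]
  refine Finset.sum_congr rfl fun a _ ↦ ?_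
  rw [mul_smul, Finset.prod_smul]

lemma aeval_sq_bernsteinPolynomial {u v : R} (h : u ^ 2 + v ^ 2 = 1) (M a : ℕ) :
    Polynomial.aeval (u ^ 2) (bernsteinPolynomial ℝ M a) =
      (√(M.choose a) • (u ^ a * v ^ (M - a))) ^ 2 := by
  rw [smul_pow, Real.sq_sqrt (Nat.cast_nonneg _), Nat.cast_smul_eq_nsmul, nsmul_eq_mul]
  simp only [bernsteinPolynomial, map_mul, map_natCast, map_pow, map_sub, map_one,
    Polynomial.aeval_X]
  rw [← h, add_sub_cancel_left]
  ring

variable {σ : Type*}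

/-- The shifts `s` and `t` keep the family of means stable under `a * C(M, a) = M * C(M-1, a-1)`,
which lowers the exponent `l` in the induction. -/
lemma tendstoExpType_binomialMean {Y : MvPowerSeries σ ℝ} (hY : Y ∈ expType σ) (l s t : ℕ) :
    TendstoExpType (fun M ↦ binomialMean Y M fun a ↦ ((a + s) / (M + t) : ℝ) ^ l) atTop
      (Y ^ l) := by
  induction l generalizing s t with
  | zero =>
    simp only [pow_zero, binomialMean_one]
    exact .const (one_mem _)
  | succ l ih =>
    have hsplit (M : ℕ) : (binomialMean Y M fun a ↦ ((a + s) / (M + t) : ℝ) ^ (l + 1)) =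
        (M + t : ℝ)⁻¹ • binomialMean Y M (fun a ↦ a * ((a + s) / (M + t) : ℝ) ^ l) +
          (s / (M + t) : ℝ) • binomialMean Y M fun a ↦ ((a + s) / (M + t) : ℝ) ^ l := by
      rw [← binomialMean_const_mul, ← binomialMean_const_mul, ← binomialMean_add]
      congr! 2 with a
      ring
    have hmain : TendstoExpType (fun M : ℕ ↦ (M + t : ℝ)⁻¹ •
        binomialMean Y M fun a ↦ a * ((a + s) / (M + t) : ℝ) ^ l) atTop
          ((1 : ℝ) • (Y * Y ^ l)) := by
      have hlim : Tendsto (fun M : ℕ ↦ ((M + 1) / (M + (t + 1 : ℕ)) : ℝ)) atTop (𝓝 1) := by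
        simpa [add_comm] using
          tendsto_add_mul_div_add_mul_atTop_nhds (𝕜 := ℝ) 1 (t + 1 : ℕ) 1 one_ne_zero
      refine .of_add_one ?_
      convert ((TendstoExpType.const hY).mul (ih (s + 1) (t + 1))).smul hlim using 2 with M
      rw [binomialMean_succ_cast_mul, smul_smul, inv_mul_eq_div]
      simp only [Nat.cast_add, Nat.cast_one, add_assoc, add_comm (1 : ℝ)]
    have hrest : Tendsto (fun M : ℕ ↦ (s / (M + t) : ℝ)) atTop (𝓝 0) :=
      (tendsto_natCast_atTop_atTop.atTop_add tendsto_const_nhds).const_div_atTop _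
    simp only [hsplit]
    simpa only [pow_succ', one_smul, zero_smul, add_zero] using hmain.add ((ih s t).smul hrest)

lemma tendstoExpType_bernsteinApprox {τ : Type*} [Fintype τ] [DecidableEq τ]
    {Y : τ → MvPowerSeries σ ℝ} (hY : ∀ i, Y i ∈ expType σ) (p : MvPolynomial τ ℝ) :
    TendstoExpType (fun M ↦ bernsteinApprox Y M p) atTop (aeval Y p) := by
  simp only [bernsteinApprox_eq_sum_prod_binomialMean, aeval_def, eval₂_eq', ← Algebra.smul_def]
  refine .sum fun d _ ↦ .smul tendsto_const_nhds (.prod fun i _ ↦ ?_)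
  simpa only [Nat.cast_zero, add_zero] using tendstoExpType_binomialMean (hY i) (d i) 0 0

lemma isSosLimit_bernsteinApprox [Fintype σ] {τ : Type*} [Fintype τ] [DecidableEq τ]
    {u v : τ → MvPowerSeries σ ℝ} (hu : ∀ i, u i ∈ expType σ) (hv : ∀ i, v i ∈ expType σ)
    (huv : ∀ i, u i ^ 2 + v i ^ 2 = 1) {p : MvPolynomial τ ℝ} (hp : ∀ x, 0 ≤ eval x p) (M : ℕ) :
    IsSosLimit (bernsteinApprox (fun i ↦ u i ^ 2) M p) := by
  refine .sum fun a _ ↦ ?_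
  simp only [fun i ↦ aeval_sq_bernsteinPolynomial (huv i), Finset.prod_pow]
  rw [← Real.sq_sqrt (hp _), ← smul_pow]
  exact .sq <| (expType σ).smul_mem (prod_mem fun i _ ↦ (expType σ).smul_mem
    (mul_mem (pow_mem (hu i) _) (pow_mem (hv i) _)) _) _

lemma isSosLimit_aeval_sq [Fintype σ] {τ : Type*} [Finite τ]
    {u v : τ → MvPowerSeries σ ℝ} (hu : ∀ i, u i ∈ expType σ) (hv : ∀ i, v i ∈ expType σ)
    (huv : ∀ i, u i ^ 2 + v i ^ 2 = 1) {p : MvPolynomial τ ℝ} (hp : ∀ x, 0 ≤ eval x p) :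
    IsSosLimit (aeval (fun i ↦ u i ^ 2) p) := by
  classical
  cases nonempty_fintype τ
  exact .of_tendsto (tendstoExpType_bernsteinApprox (fun i ↦ pow_mem (hu i) 2) p)
    (.of_forall (isSosLimit_bernsteinApprox hu hv huv hp))

end Bernstein

section Trigonometric

open PowerSeries (derivative sin cos)

lemma constantCoeff_sin : PowerSeries.constantCoeff (sin ℝ) = 0 := by
  rw [← PowerSeries.coeff_zero_eq_constantCoeff_apply, sin, PowerSeries.coeff_mk, if_pos Even.zero]

lemma constantCoeff_cos : PowerSeries.constantCoeff (cos ℝ) = 1 := by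
  rw [← PowerSeries.coeff_zero_eq_constantCoeff_apply, cos, PowerSeries.coeff_mk, if_pos Even.zero]
  simp

lemma derivative_sin : derivative ℝ (sin ℝ) = cos ℝ := by
  ext k
  rw [PowerSeries.coeff_derivative, sin, cos, PowerSeries.coeff_mk, PowerSeries.coeff_mk]
  obtain ⟨j, rfl | rfl⟩ := k.even_or_odd'
  · have hj : (2 * j + 1) / 2 = j := by lia
    rw [if_neg (Nat.not_even_bit1 j), if_pos (even_two_mul j), hj, Nat.factorial_succ,
      mul_div_cancel_left₀ j two_ne_zero]
    push_cast [eq_ratCast]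
    field_simp
  · simp [parity_simps]

lemma derivative_cos : derivative ℝ (cos ℝ) = -sin ℝ := by
  ext k
  rw [PowerSeries.coeff_derivative, map_neg, sin, cos, PowerSeries.coeff_mk, PowerSeries.coeff_mk]
  obtain ⟨j, rfl | rfl⟩ := k.even_or_odd'
  · simp [parity_simps]
  · have hj : (2 * j + 1) / 2 = j := by lia
    have hj' : (2 * j + 1 + 1) / 2 = j + 1 := by lia
    rw [if_pos (by simp [parity_simps]), if_neg (Nat.not_even_bit1 j), hj, hj', Nat.factorial_succ,
      pow_succ]
    push_cast [eq_ratCast]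
    field_simp

lemma cos_sq_add_sin_sq : cos ℝ ^ 2 + sin ℝ ^ 2 = 1 := by
  apply PowerSeries.derivative.ext
  · rw [map_add, PowerSeries.derivative_pow, PowerSeries.derivative_pow, derivative_cos,
      derivative_sin, PowerSeries.derivative_one]
    ring
  · rw [map_add, map_pow, map_pow, constantCoeff_sin, constantCoeff_cos, map_one]
    norm_num

lemma abs_coeff_sin_le (k : ℕ) : |PowerSeries.coeff k (sin ℝ)| ≤ (k ! : ℝ)⁻¹ := by
  rw [sin, PowerSeries.coeff_mk]
  split_ifs <;> simp [abs_div]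

lemma abs_coeff_cos_le (k : ℕ) : |PowerSeries.coeff k (cos ℝ)| ≤ (k ! : ℝ)⁻¹ := by
  rw [cos, PowerSeries.coeff_mk]
  split_ifs <;> simp [abs_div]

variable {σ : Type*}

lemma subst_X_mem_expType {f : PowerSeries ℝ} {B c : ℝ} (hc : 0 ≤ c)
    (hf : ∀ k, |PowerSeries.coeff k f| ≤ B * (c ^ k / k !)) (i : σ) :
    f.subst (MvPowerSeries.X i : MvPowerSeries σ ℝ) ∈ expType σ := by
  classical
  refine ⟨B, c, hc, fun α ↦ ?_⟩
  rw [PowerSeries.coeff_subst_single]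
  split_ifs with h
  · rw [h, Finsupp.degree_single, Finsupp.single_eq_same]
    exact hf _
  · rw [abs_zero]
    exact mul_nonneg (by simpa using (abs_nonneg _).trans (hf 0)) (by positivity)

lemma X_mem_expType (i : σ) : MvPowerSeries.X i ∈ expType σ := by
  rw [← PowerSeries.subst_X (R := ℝ) (PowerSeries.HasSubst.X i)]
  refine subst_X_mem_expType zero_le_one (B := 1) (fun k ↦ ?_) i
  rw [PowerSeries.coeff_X]
  split_ifs with hk
  · simp [hk]
  · simp

lemma exists_mem_expType_sq_add_X_mul_sq_eq_one (i : σ) :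
    ∃ c ∈ expType σ, ∃ w ∈ expType σ, c ^ 2 + (MvPowerSeries.X i * w) ^ 2 = 1 ∧
      MvPowerSeries.constantCoeff c = 1 ∧ MvPowerSeries.constantCoeff w = 1 := by
  set sinc : PowerSeries ℝ := PowerSeries.mk fun k ↦ PowerSeries.coeff (k + 1) (sin ℝ)
  have hsin : sin ℝ = PowerSeries.X * sinc := by
    rw [← PowerSeries.sub_const_eq_X_mul_shift, constantCoeff_sin, map_zero, sub_zero]
  have hsinc (k : ℕ) : |PowerSeries.coeff k sinc| ≤ 1 * (1 ^ k / k !) := by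
    rw [PowerSeries.coeff_mk, one_mul, one_pow, one_div]
    refine (abs_coeff_sin_le _).trans ?_
    gcongr
    exact k.le_succ
  have hX := PowerSeries.HasSubst.X (S := ℝ) i
  refine ⟨(cos ℝ).subst (MvPowerSeries.X i), subst_X_mem_expType zero_le_one (B := 1)
    (by simpa using abs_coeff_cos_le) i, sinc.subst (MvPowerSeries.X i),
    subst_X_mem_expType zero_le_one hsinc i, ?_, ?_, ?_⟩
  · have h := congrArg (PowerSeries.substAlgHom (R := ℝ) hX) cos_sq_add_sin_sq
    rwa [hsin, map_add, map_pow, map_pow, map_mul, map_one, PowerSeries.substAlgHom_X,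
      PowerSeries.coe_substAlgHom] at h
  · classical
    rw [← MvPowerSeries.coeff_zero_eq_constantCoeff_apply, PowerSeries.coeff_subst_single]
    simp [cos]
  · classical
    rw [← MvPowerSeries.coeff_zero_eq_constantCoeff_apply, PowerSeries.coeff_subst_single]
    simp [sinc, sin]

lemma coeff_rescale_const (t : ℝ) (h : MvPowerSeries σ ℝ) (α : σ →₀ ℕ) :
    MvPowerSeries.coeff α (MvPowerSeries.rescale (fun _ ↦ t) h) =
      t ^ α.degree * MvPowerSeries.coeff α h := by
  rw [MvPowerSeries.coeff_rescale, Finsupp.prod, Finset.prod_pow_eq_pow_sum, Finsupp.degree_apply]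

lemma rescale_const_X (t : ℝ) (i : σ) :
    MvPowerSeries.rescale (fun _ ↦ t) (MvPowerSeries.X i) =
      t • (MvPowerSeries.X i : MvPowerSeries σ ℝ) := by
  classical
  ext α
  rw [coeff_rescale_const, MvPowerSeries.coeff_smul, MvPowerSeries.coeff_X]
  split_ifs with h
  · rw [h, Finsupp.degree_single, pow_one]
  · rw [mul_zero, mul_zero]

lemma HasExpBound.rescale_const {B c : ℝ} {h : MvPowerSeries σ ℝ} (hh : HasExpBound B c h)
    (t : ℝ) :
    HasExpBound B (|t| * c) (MvPowerSeries.rescale (fun _ ↦ t) h) := fun α ↦ by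
  rw [coeff_rescale_const, abs_mul, abs_pow, mul_pow, mul_div_assoc, mul_left_comm]
  exact mul_le_mul_of_nonneg_left (hh α) (by positivity)

lemma rescale_const_mem_expType {h : MvPowerSeries σ ℝ} (hh : h ∈ expType σ) (t : ℝ) :
    MvPowerSeries.rescale (fun _ ↦ t) h ∈ expType σ :=
  let ⟨B, c, hc, hB⟩ := hh
  ⟨B, |t| * c, by positivity, hB.rescale_const t⟩

lemma tendstoExpType_rescale_const {h : MvPowerSeries σ ℝ} (hh : h ∈ expType σ) :
    TendstoExpType (fun t : ℝ ↦ MvPowerSeries.rescale (fun _ ↦ t) h) (𝓝 0)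
      (MvPowerSeries.C (MvPowerSeries.constantCoeff h)) where
  bound := by
    obtain ⟨B, c, hc, hB⟩ := hh
    have hsmall : ∀ᶠ t : ℝ in 𝓝 0, |t| ≤ 1 :=
      (continuous_abs.tendsto (0 : ℝ)).eventually_le_const (by norm_num)
    refine ⟨B, c, hc, hsmall.mono fun t ht ↦ ?_⟩
    exact (hB.rescale_const t).mono le_rfl (by positivity) (mul_le_of_le_one_left hc ht)
  tendsto_coeff α := by
    rw [← MvPowerSeries.rescale_zero_apply, Pi.zero_def]
    simp only [coeff_rescale_const]
    exact (tendsto_id.pow _).mul_const _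

lemma aeval_X_eq_coe (p : MvPolynomial σ ℝ) :
    aeval (fun i ↦ (MvPowerSeries.X i : MvPowerSeries σ ℝ)) p = p := by
  induction p using MvPolynomial.induction_on with
  | C a => rw [aeval_C, coe_C]; rfl
  | add p q hp hq => rw [map_add, hp, hq, coe_add]
  | mul_X p i hp => rw [map_mul, hp, aeval_X, coe_mul, coe_X]

lemma isSumSq_of_isEmpty [IsEmpty σ] {p : MvPolynomial σ ℝ} (hp : ∀ x, 0 ≤ eval x p) :
    IsSumSq p := by
  have h := hp isEmptyElim
  rw [p.eq_C_of_isEmpty, eval_C] at h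
  rw [p.eq_C_of_isEmpty, ← mul_one (C _), ← smul_eq_C_mul]
  exact isSumSq_smul_of_nonneg h .one

variable [Fintype σ] {τ : Type*} [Finite τ]

lemma isSosLimit_aeval_mul_smul {c s : τ → MvPowerSeries σ ℝ} (hc : ∀ i, c i ∈ expType σ)
    (hs : ∀ i, s i ∈ expType σ) (hcs : ∀ i, c i ^ 2 + s i ^ 2 = 1) (a : ℝ)
    {p : MvPolynomial τ ℝ} (hp : ∀ x, 0 ≤ eval x p) :
    IsSosLimit (aeval (fun i ↦ a • (c i * s i)) p) := by
  -- `((c + s) / √2) ^ 2 = 1 / 2 + c * s` moves `c * s` into the range of `isSosLimit_aeval_sq`.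
  have half_add_half :
      algebraMap ℝ (MvPowerSeries σ ℝ) (1 / 2) + algebraMap ℝ _ (1 / 2) = 1 := by
    rw [← map_add, add_halves, map_one]
  have hsq {x y : MvPowerSeries σ ℝ} (h : x ^ 2 + y ^ 2 = 1) :
      ((√2)⁻¹ • (x + y)) ^ 2 = algebraMap ℝ _ (1 / 2) + x * y := by
    rw [smul_pow, inv_pow, Real.sq_sqrt zero_le_two, Algebra.smul_def, ← one_div]
    linear_combination algebraMap ℝ (MvPowerSeries σ ℝ) (1 / 2) * h + x * y * half_add_half
  have hv (i : τ) : ((√2)⁻¹ • (c i + -s i)) ^ 2 = algebraMap ℝ _ (1 / 2) + c i * -s i :=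
    hsq (by rw [neg_sq, hcs i])
  set q : MvPolynomial τ ℝ := aeval (fun i ↦ a • (X i - C (1 / 2))) p
  have hq (x : τ → ℝ) : 0 ≤ eval x q := by
    rw [← coe_aeval_eq_eval, RingHom.coe_coe, comp_aeval_apply]
    exact hp _
  have hlim := isSosLimit_aeval_sq
    (fun i ↦ (expType σ).smul_mem (add_mem (hc i) (hs i)) (√2)⁻¹)
    (fun i ↦ (expType σ).smul_mem (add_mem (hc i) (neg_mem (hs i))) (√2)⁻¹)
    (fun i ↦ by rw [hsq (hcs i), hv]; linear_combination half_add_half) hq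
  rw [comp_aeval_apply] at hlim
  convert hlim using 4 with i
  rw [map_smul, map_sub, aeval_X, algHom_C, hsq (hcs i), add_sub_cancel_left]

lemma isSosLimit_of_eval_nonneg {p : MvPolynomial σ ℝ} (hp : ∀ x, 0 ≤ eval x p) :
    IsSosLimit (p : MvPowerSeries σ ℝ) := by
  choose c hc w hw hcw hc1 hw1 using exists_mem_expType_sq_add_X_mul_sq_eq_one (σ := σ)
  have hlim (i : σ) : TendstoExpType
      (fun t : ℝ ↦ MvPowerSeries.X i * MvPowerSeries.rescale (fun _ ↦ t) (c i * w i)) (𝓝 0)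
      (MvPowerSeries.X i) := by
    simpa [hc1, hw1] using (TendstoExpType.const (X_mem_expType i)).mul
      (tendstoExpType_rescale_const (mul_mem (hc i) (hw i)))
  rw [← aeval_X_eq_coe]
  refine .of_tendsto (l := 𝓝[≠] 0)
    ((TendstoExpType.aeval hlim p).mono_left nhdsWithin_le_nhds) ?_
  filter_upwards [self_mem_nhdsWithin] with t (ht : t ≠ 0)
  have hmem {h : MvPowerSeries σ ℝ} (hh : h ∈ expType σ) := rescale_const_mem_expType hh t
  convert isSosLimit_aeval_mul_smul (fun i ↦ hmem (hc i))
    (fun i ↦ hmem (mul_mem (X_mem_expType i) (hw i)))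
    (fun i ↦ by rw [← map_pow, ← map_pow, ← map_add, hcw, map_one]) t⁻¹ hp using 4 with i
  rw [map_mul, map_mul, rescale_const_X, smul_mul_assoc, mul_smul_comm, inv_smul_smul₀ ht,
    mul_left_comm]

lemma exists_forall_ge_isSumSq_add_smul_expSq {p : MvPolynomial σ ℝ} (hp : ∀ x, 0 ≤ eval x p)
    {ε : ℝ} (hε : 0 < ε) : ∃ r₀, ∀ r ≥ r₀, IsSumSq (p + ε • expSq σ r) := by
  cases isEmpty_or_nonempty σ with
  | inl _ =>
    exact ⟨0, fun r _ ↦ (isSumSq_of_isEmpty hp).add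
      (isSumSq_smul_of_nonneg hε.le (isSumSq_expSq r))⟩
  | inr _ =>
    obtain ⟨q, hq, hclose⟩ :=
      isSosLimit_of_eval_nonneg hp (ε / 2 ^ Fintype.card σ) (by positivity)
    refine ⟨(q - p).totalDegree / 2 + 1, fun r hr ↦ ?_⟩
    have h : q - p ≼ ε • expSq σ r := by
      simpa using sub_sosLE_of_coeffClose hclose.symm hr
    refine SosLE.isSumSq_of_le hq ?_
    rwa [SosLE, add_comm, ← sub_sub_eq_add_sub]

end Trigonometric

section Penalty

lemma exists_nonneg_forall_nonneg_add_mul {S : Type*} [TopologicalSpace S] {G H : S → ℝ}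
    (hG : Continuous G) (hH : Continuous H) (hH₀ : ∀ x, 0 ≤ H x) (hGH : ∀ x, H x = 0 → 0 < G x)
    (hG₀ : ∀ᶠ x in cocompact S, 0 ≤ G x) : ∃ l : ℝ, 0 ≤ l ∧ ∀ x, 0 ≤ G x + l * H x := by
  obtain ⟨K, hK, hKG⟩ := mem_cocompact.1 hG₀
  have hpos (x : S) (hx : x ∈ K ∩ {x | G x ≤ 0}) : 0 < H x :=
    (hH₀ x).lt_of_ne fun h ↦ (hGH x h.symm).not_ge hx.2
  obtain ⟨l, hl⟩ := (hK.inter_right (isClosed_le hG continuous_const)).exists_bound_of_continuousOn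
    (hG.continuousOn.div hH.continuousOn fun x hx ↦ (hpos x hx).ne')
  refine ⟨max l 0, le_max_right _ _, fun x ↦ ?_⟩
  by_cases hx : x ∈ K ∩ {x | G x ≤ 0}
  · have hratio : -(G x / H x) ≤ max l 0 :=
      (neg_le_abs _).trans ((hl x hx).trans (le_max_left _ _))
    rw [← neg_div, div_le_iff₀ (hpos x hx)] at hratio
    linarith
  · have hGx : 0 ≤ G x := by
      by_contra! h
      exact h.not_ge (hKG fun hxK ↦ hx ⟨hxK, h.le⟩)
    exact add_nonneg hGx (mul_nonneg (le_max_right _ _) (hH₀ x))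

variable {σ : Type*}

lemma eval_nonneg_of_isSumSq {p : MvPolynomial σ ℝ} (hp : IsSumSq p) (x : σ → ℝ) :
    0 ≤ eval x p := by
  induction hp with
  | zero => rw [map_zero]
  | sq_add a _ ih =>
    rw [map_add, map_mul]
    exact add_nonneg (mul_self_nonneg _) ih

lemma SosLE.eval_le_eval {p q : MvPolynomial σ ℝ} (h : p ≼ q) (x : σ → ℝ) :
    eval x p ≤ eval x q := by
  simpa using eval_nonneg_of_isSumSq h x

lemma abs_eval_le (p : MvPolynomial σ ℝ) {x : σ → ℝ} {s : ℝ} (hs : 1 ≤ s)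
    (hx : ∀ i, |x i| ≤ s) :
    |eval x p| ≤ (∑ α ∈ p.support, |coeff α p|) * s ^ p.totalDegree := by
  rw [eval_eq, Finset.sum_mul]
  refine (Finset.abs_sum_le_sum_abs _ _).trans (Finset.sum_le_sum fun α hα ↦ ?_)
  rw [abs_mul, Finset.abs_prod]
  refine mul_le_mul_of_nonneg_left ?_ (abs_nonneg _)
  calc ∏ i ∈ α.support, |x i ^ α i|
      ≤ ∏ i ∈ α.support, s ^ α i := Finset.prod_le_prod (fun _ _ ↦ abs_nonneg _) fun i _ ↦ by
        rw [abs_pow]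
        exact pow_le_pow_left₀ (abs_nonneg _) (hx i) _
    _ = s ^ α.degree := by rw [Finset.prod_pow_eq_pow_sum, Finsupp.degree_apply]
    _ ≤ s ^ p.totalDegree := pow_le_pow_right₀ hs (le_totalDegree hα)

variable [Fintype σ]

lemma norm_pow_two_mul_le_eval_expSq [Nonempty σ] (x : σ → ℝ) {s r : ℕ} (h : s ≤ r) :
    ‖x‖ ^ (2 * s) ≤ s ! * eval x (expSq σ r) := by
  obtain ⟨i, hi⟩ := Finite.exists_max fun i ↦ |x i|
  have hnorm : ‖x‖ ≤ |x i| := (pi_norm_le_iff_of_nonneg (abs_nonneg _)).2 hi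
  calc ‖x‖ ^ (2 * s)
      ≤ |x i| ^ (2 * s) := pow_le_pow_left₀ (norm_nonneg x) hnorm _
    _ = x i ^ (2 * s) := (even_two_mul s).pow_abs _
    _ ≤ ∑ j, x j ^ (2 * s) :=
      Finset.single_le_sum (fun j _ ↦ (even_two_mul s).pow_nonneg (x j)) (Finset.mem_univ i)
    _ = eval x (psum σ ℝ (2 * s)) := by simp [psum]
    _ ≤ eval x ((s ! : ℝ) • expSq σ r) := (psum_sosLE_expSq h).eval_le_eval x
    _ = s ! * eval x (expSq σ r) := smul_eval x _ _

lemma eval_expSq_pos [Nonempty σ] (x : σ → ℝ) (r : ℕ) : 0 < eval x (expSq σ r) := by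
  simpa using one_pos.trans_le (norm_pow_two_mul_le_eval_expSq x r.zero_le)

lemma eventually_cocompact_nonneg_eval_add_smul_expSq [Nonempty σ] (p : MvPolynomial σ ℝ) {δ : ℝ}
    (hδ : 0 < δ) :
    ∀ᶠ x in cocompact (σ → ℝ), 0 ≤ eval x (p + δ • expSq σ (p.totalDegree + 1)) := by
  set d := p.totalDegree
  set B := ∑ α ∈ p.support, |coeff α p|
  have hlarge := (tendsto_norm_cocompact_atTop (E := σ → ℝ)).eventually_ge_atTop
  filter_upwards [hlarge 1, hlarge (B * (d + 1)! / δ)] with x hx₁ hx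
  have hp : |eval x p| ≤ B * ‖x‖ ^ d := abs_eval_le p hx₁ (norm_le_pi_norm x)
  have hdom : B * ‖x‖ ^ d ≤ δ * eval x (expSq σ (d + 1)) := by
    refine le_of_mul_le_mul_right ?_ (Nat.cast_pos.2 (d + 1).factorial_pos : (0 : ℝ) < (d + 1)!)
    calc B * ‖x‖ ^ d * (d + 1)!
        = B * (d + 1)! * ‖x‖ ^ d := by ring
      _ ≤ ‖x‖ * δ * ‖x‖ ^ d := mul_le_mul_of_nonneg_right ((div_le_iff₀ hδ).1 hx) (by positivity)
      _ = δ * ‖x‖ ^ (d + 1) := by ring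
      _ ≤ δ * ‖x‖ ^ (2 * (d + 1)) := by gcongr; lia
      _ ≤ δ * ((d + 1)! * eval x (expSq σ (d + 1))) := by
        gcongr; exact norm_pow_two_mul_le_eval_expSq x le_rfl
      _ = δ * eval x (expSq σ (d + 1)) * (d + 1)! := by ring
  rw [map_add, smul_eval]
  linarith [neg_abs_le (eval x p)]

lemma exists_eval_add_smul_expSq_add_smul_nonneg {p q : MvPolynomial σ ℝ}
    (hq : ∀ x, 0 ≤ eval x q) (hp : ∀ x, eval x q = 0 → 0 ≤ eval x p) {δ : ℝ} (hδ : 0 < δ) :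
    ∃ (r : ℕ) (l : ℝ), 0 ≤ l ∧ ∀ x, 0 ≤ eval x (p + δ • expSq σ r + l • q) := by
  cases isEmpty_or_nonempty σ with
  | inl _ =>
    refine ⟨0, |eval isEmptyElim p| / eval isEmptyElim q,
      div_nonneg (abs_nonneg _) (hq _), fun x ↦ ?_⟩
    obtain rfl := Subsingleton.elim isEmptyElim x
    have hexp : 0 ≤ δ * eval isEmptyElim (expSq σ 0) :=
      mul_nonneg hδ.le (eval_nonneg_of_isSumSq (isSumSq_expSq 0) _)
    rw [map_add, map_add, smul_eval, smul_eval]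
    obtain hq₀ | hq₀ := eq_or_ne (eval isEmptyElim q) 0
    · rw [hq₀, mul_zero, add_zero]
      exact add_nonneg (hp _ hq₀) hexp
    · rw [div_mul_cancel₀ _ hq₀]
      linarith [neg_abs_le (eval isEmptyElim p)]
  | inr _ =>
    refine ⟨p.totalDegree + 1, ?_⟩
    simp only [map_add _ (_ + _) (_ • q), smul_eval _ q]
    refine exists_nonneg_forall_nonneg_add_mul (continuous_eval _) (continuous_eval _) hq
      (fun x hx ↦ ?_) (eventually_cocompact_nonneg_eval_add_smul_expSq p hδ)
    rw [map_add, smul_eval]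
    exact add_pos_of_nonneg_of_pos (hp x hx) (mul_pos hδ (eval_expSq_pos x _))

lemma exists_forall_ge_isSumSq_add_smul_expSq_add_smul {p q : MvPolynomial σ ℝ}
    (hq : ∀ x, 0 ≤ eval x q) (hp : ∀ x, eval x q = 0 → 0 ≤ eval x p) {ε : ℝ} (hε : 0 < ε) :
    ∃ l : ℝ, 0 ≤ l ∧ ∃ r₀, ∀ r ≥ r₀, IsSumSq (p + ε • expSq σ r + l • q) := by
  obtain ⟨r₁, l, hl, hpos⟩ := exists_eval_add_smul_expSq_add_smul_nonneg hq hp (half_pos hε)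
  obtain ⟨r₂, hsos⟩ := exists_forall_ge_isSumSq_add_smul_expSq hpos (half_pos hε)
  refine ⟨l, hl, max r₁ r₂, fun r hr ↦ SosLE.isSumSq_of_le (hsos r (le_of_max_le_right hr)) ?_⟩
  calc p + (ε / 2) • expSq σ r₁ + l • q + (ε / 2) • expSq σ r
      = p + l • q + (ε / 2) • expSq σ r + (ε / 2) • expSq σ r₁ := by abel
    _ ≼ p + l • q + (ε / 2) • expSq σ r + (ε / 2) • expSq σ r :=
      (SosLE.refl _).add ((expSq_sosLE_expSq (le_of_max_le_left hr)).smul (half_pos hε).le)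
    _ = p + ε • expSq σ r + l • q := by
      rw [add_assoc (p + _), ← add_smul, add_halves, add_right_comm]

end Penalty

lemma theta_eq_expSq (n r : ℕ) : theta n r = expSq (Fin n) r := by
  simp only [theta, expSq, psum, Finset.smul_sum, smul_eq_C_mul, one_div]

lemma rename_theta_add_rename_theta (n m r : ℕ) :
    rename (Fin.castAdd m) (theta n r) + rename (Fin.natAdd n) (theta m r) = theta (n + m) r := by
  simp only [theta, map_sum, map_mul, map_pow, rename_C, rename_X, Fin.sum_univ_add,
    Finset.sum_add_distrib]

/-- The sum of the `(g_j(x) - z_j ^ 2) ^ 2`, whose real zeros are the points of the set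
`{x | ∀ j, 0 ≤ g_j(x)}` together with square roots `z_j` of the values `g_j(x)`. -/
noncomputable def slackPenalty {n m : ℕ} (g : Fin m → MvPolynomial (Fin n) ℝ) :
    MvPolynomial (Fin (n + m)) ℝ :=
  ∑ j, (rename (Fin.castAdd m) (g j) - X (Fin.natAdd n j) ^ 2) ^ 2

lemma eval_slackPenalty {n m : ℕ} (g : Fin m → MvPolynomial (Fin n) ℝ) (x : Fin (n + m) → ℝ) :
    eval x (slackPenalty g) =
      ∑ j, (eval (x ∘ Fin.castAdd m) (g j) - x (Fin.natAdd n j) ^ 2) ^ 2 := by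
  simp only [slackPenalty, map_sum, map_pow, map_sub, eval_rename, eval_X]

lemma eval_slackPenalty_nonneg {n m : ℕ} (g : Fin m → MvPolynomial (Fin n) ℝ)
    (x : Fin (n + m) → ℝ) : 0 ≤ eval x (slackPenalty g) := by
  rw [eval_slackPenalty]
  exact Finset.sum_nonneg fun j _ ↦ sq_nonneg _

lemma eval_nonneg_of_eval_slackPenalty_eq_zero {n m : ℕ} {g : Fin m → MvPolynomial (Fin n) ℝ}
    {x : Fin (n + m) → ℝ} (hx : eval x (slackPenalty g) = 0) (j : Fin m) :
    0 ≤ eval (x ∘ Fin.castAdd m) (g j) := by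
  rw [eval_slackPenalty, Finset.sum_eq_zero_iff_of_nonneg fun j _ ↦ sq_nonneg _] at hx
  rw [sub_eq_zero.1 (sq_eq_zero_iff.1 (hx j (Finset.mem_univ j)))]
  exact sq_nonneg _

theorem sos_approx_on_semialgebraic_set (n m : ℕ)
    (g : Fin m → MvPolynomial (Fin n) ℝ) (f : MvPolynomial (Fin n) ℝ)
    (hf : ∀ x : Fin n → ℝ, (∀ j, 0 ≤ eval x (g j)) → 0 ≤ eval x f) :
    ∀ ε : ℝ, 0 < ε →
      ∃ (lam : Fin m → ℝ), (∀ j, 0 ≤ lam j) ∧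
        ∃ r₀ : ℕ, ∀ r : ℕ, r₀ ≤ r →
          IsSOS (rename (Fin.castAdd m) f
            + C ε * rename (Fin.castAdd m) (theta n r)
            + C ε * rename (Fin.natAdd n) (theta m r)
            + ∑ j, C (lam j) *
                (rename (Fin.castAdd m) (g j) - X (Fin.natAdd n j) ^ 2) ^ 2) := by
  intro ε hε
  obtain ⟨l, hl, r₀, hsos⟩ := exists_forall_ge_isSumSq_add_smul_expSq_add_smul
    (p := rename (Fin.castAdd m) f) (eval_slackPenalty_nonneg g)
    (fun x hx ↦ by
      rw [eval_rename]
      exact hf _ (eval_nonneg_of_eval_slackPenalty_eq_zero hx)) hε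
  refine ⟨fun _ ↦ l, fun _ ↦ hl, r₀, fun r hr ↦ isSOS_of_isSumSq ?_⟩
  have h := hsos r hr
  rwa [← theta_eq_expSq, ← rename_theta_add_rename_theta, smul_eq_C_mul, smul_eq_C_mul, mul_add,
    ← add_assoc, slackPenalty, Finset.mul_sum] at h
end

section
/- Let g_1,…,g_m, f ∈ ℝ[x_1,…,x_n], let V = {x ∈ ℝ^n : g_j(x) = 0 for j = 1,…,m}, and let M > 0 be large enough that B_M ∩ V ≠ ∅. Let r ∈ ℕ satisfy 2r > max(deg f, deg g_j^2 for all j). Call a Borel probability measure μ on ℝ^n feasible if f, θ_r and each g_j^2 are μ-integrable, ∫ g_j^2 dμ ≤ 0 for all j, and ∫ θ_r dμ ≤ n·e^{M²}; call a triple (λ, δ, γ) ∈ ℝ_+^m × ℝ_+ × ℝ dually feasible if f(x) + δ·θ_r(x) + ∑_{j=1}^m λ_j·g_j(x)^2 ≥ γ for all x ∈ ℝ^n. Then there exists a feasible measure μ* attaining the minimum of ∫ f dμ over feasible μ, and this minimum equals the supremum of γ − n·δ·e^{M²} over dually feasible triples (λ, δ, γ). -/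
open MvPolynomial MeasureTheory Filter Topology

/-- Feasibility for the moment problem `𝒫_M^r`: `μ` is a Borel probability measure with
`f`, `θ_r` and each `g_j^2` integrable, `∫ g_j^2 dμ ≤ 0` and `∫ θ_r dμ ≤ n e^{M²}`. -/
def PFeas (n m : ℕ) (g : Fin m → MvPolynomial (Fin n) ℝ) (f : MvPolynomial (Fin n) ℝ)
    (r : ℕ) (M : ℝ) (μ : Measure (Fin n → ℝ)) : Prop :=
  IsProbabilityMeasure μ ∧
  Integrable (fun x => eval x f) μ ∧
  Integrable (fun x => eval x (theta n r)) μ ∧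
  (∀ j, Integrable (fun x => (eval x (g j)) ^ 2) μ) ∧
  (∀ j, (∫ x, (eval x (g j)) ^ 2 ∂μ) ≤ 0) ∧
  (∫ x, eval x (theta n r) ∂μ) ≤ (n : ℝ) * Real.exp (M ^ 2)

/-- The optimal value `inf 𝒫_M^r` of the moment problem. -/
noncomputable def infP (n m : ℕ) (g : Fin m → MvPolynomial (Fin n) ℝ)
    (f : MvPolynomial (Fin n) ℝ) (r : ℕ) (M : ℝ) : ℝ :=
  sInf {v | ∃ μ : Measure (Fin n → ℝ), PFeas n m g f r M μ ∧ v = ∫ x, eval x f ∂μ}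

/-!
The moment vectors `(∫ f dμ, ∫ θ dμ, (∫ h_j dμ)_j)` of probability measures `μ` form a convex set,
where `h_j = g_j ^ 2`. Since `θ` is coercive, `{μ | ∫ θ dμ ≤ T}` is weakly compact by Prokhorov's
theorem. A function `φ = o(θ)` may be unbounded below, but `φ + ε θ` is bounded below for every
`ε > 0`; letting `ε → 0` shows that `μ ↦ ∫ φ dμ` is lower semicontinuous on this compact set. Hence
the minimum is attained and the upper closure of the set of moment vectors is closed. For `q` below
the minimum, separating `(q, R, 0)` from this upper closure, where `R = n e ^ (M ^ 2)`, yields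
nonnegative multipliers, and evaluating the separating inequality at Dirac measures turns it into
the dual constraint, so `q` is at most the dual supremum.
-/

open Set Asymptotics
open scoped ENNReal NNReal

section ConvexDuality

variable {E : Type*} [AddCommGroup E] [Preorder E] [Module ℝ E] [IsOrderedAddMonoid E]
  [PosSMulMono ℝ E]

theorem convex_upperClosure {s : Set E} (hs : Convex ℝ s) :
    Convex ℝ (upperClosure s : Set E) := by
  rintro z ⟨x, hx, hxz⟩ w ⟨y, hy, hyw⟩ a b ha hb hab
  exact ⟨a • x + b • y, hs hx hy ha hb hab, by gcongr⟩

variable [TopologicalSpace E] [IsTopologicalAddGroup E] [ContinuousSMul ℝ E]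
  [LocallyConvexSpace ℝ E]

theorem exists_nonneg_strongDual_lt {s : Set E} {p : E}
    (hconv : Convex ℝ s) (hclosed : IsClosed s) (hupper : IsUpperSet s) (hp : p ∉ s) :
    ∃ l : StrongDual ℝ E, (∀ z, 0 ≤ z → 0 ≤ l z) ∧ ∀ z ∈ s, l p < l z := by
  obtain rfl | ⟨x, hx⟩ := s.eq_empty_or_nonempty
  · exact ⟨0, by simp⟩
  obtain ⟨l, u, hpu, hu⟩ := geometric_hahn_banach_point_closed hconv hclosed hp
  refine ⟨l, fun z hz => ?_, fun z hz => hpu.trans (hu z hz)⟩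
  by_contra! hlz
  -- Otherwise `l` would be unbounded below on the ray `x + t • z`, which stays in `s`.
  have hray (t : ℝ) (ht : 0 ≤ t) : u < l x + t * l z := by
    simpa using hu _ (hupper (le_add_of_nonneg_right (smul_nonneg ht hz)) hx)
  have := hray ((u - l x) / l z) (div_nonneg_of_nonpos (by linarith [hu x hx]) hlz.le)
  rw [div_mul_cancel₀ _ hlz.ne] at this
  linarith

theorem exists_lagrange_multiplier {s : Set (ℝ × E)} {b : E} {q : ℝ} (hconv : Convex ℝ s)
    (hclosed : IsClosed (upperClosure s : Set (ℝ × E))) (hfeas : ∃ p ∈ s, p.2 ≤ b)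
    (hq : ∀ p ∈ s, p.2 ≤ b → q < p.1) :
    ∃ Λ : StrongDual ℝ E, (∀ z, 0 ≤ z → 0 ≤ Λ z) ∧ ∀ p ∈ s, q + Λ b ≤ p.1 + Λ p.2 := by
  have hqb : (q, b) ∉ (upperClosure s : Set (ℝ × E)) := by
    rintro ⟨p, hp, hpq, hpb⟩
    exact (hq p hp hpb).not_ge hpq
  obtain ⟨l, hl_nonneg, hl⟩ :=
    exists_nonneg_strongDual_lt (convex_upperClosure hconv) hclosed (upperClosure s).upper hqb
  set a : ℝ := l (1, 0)
  set L : StrongDual ℝ E := l.comp (.inr ℝ ℝ E)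
  have hl_apply (p : ℝ × E) : l p = a * p.1 + L p.2 := by
    rw [show p = p.1 • ((1 : ℝ), (0 : E)) + (0, p.2) by simp, map_add, map_smul]
    simp [L, a, mul_comm]
  have hL_nonneg (z : E) (hz : 0 ≤ z) : 0 ≤ L z := hl_nonneg _ ⟨le_rfl, hz⟩
  have hsep (p) (hp : p ∈ s) : a * q + L b < a * p.1 + L p.2 := by
    simpa only [hl_apply] using hl p (subset_upperClosure hp)
  -- Strict separation at a feasible point plays the role of Slater's condition.
  have ha : 0 < a := by
    obtain ⟨p₀, hp₀, hp₀b⟩ := hfeas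
    have hLp₀ : L p₀.2 ≤ L b := by simpa using hL_nonneg (b - p₀.2) (sub_nonneg.2 hp₀b)
    have : 0 < a * (p₀.1 - q) := by linarith [hsep p₀ hp₀]
    exact pos_of_mul_pos_left this (sub_pos.2 (hq p₀ hp₀ hp₀b)).le
  refine ⟨a⁻¹ • L, fun z hz => ?_, fun p hp => ?_⟩
  · exact mul_nonneg (inv_nonneg.2 ha.le) (hL_nonneg z hz)
  · have := mul_le_mul_of_nonneg_left (hsep p hp).le (inv_nonneg.2 ha.le)
    simpa [mul_add, inv_mul_cancel_left₀ ha.ne'] using this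

end ConvexDuality

theorem isClosed_upperClosure_image {α E : Type*} [TopologicalSpace α] [TopologicalSpace E]
    [Preorder E] {K : Set α} {F : α → E} (hK : IsCompact K)
    (hepi : IsClosed {p : K × E | F p.1 ≤ p.2}) : IsClosed (upperClosure (F '' K) : Set E) := by
  have : CompactSpace K := isCompact_iff_compactSpace.1 hK
  convert isClosedMap_snd_of_compactSpace _ hepi
  ext z
  simp

section BddBelow

variable {Ω : Type*} [TopologicalSpace Ω] {φ θ : Ω → ℝ}

theorem bddBelow_range_of_eventually_cocompact (hφ : Continuous φ) {c : ℝ}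
    (hc : ∀ᶠ x in cocompact Ω, c ≤ φ x) : BddBelow (range φ) := by
  obtain ⟨K, hK, hKc⟩ := mem_cocompact.1 hc
  refine ((hK.bddBelow_image hφ.continuousOn).union bddBelow_Ici).mono (t := φ '' K ∪ Ici c) ?_
  rintro _ ⟨x, rfl⟩
  by_cases hx : x ∈ K
  · exact .inl ⟨x, hx, rfl⟩
  · exact .inr (hKc hx)

theorem bddBelow_range_add_mul_of_isLittleO (hφ : Continuous φ) (hθ : Continuous θ)
    (hθ_top : Tendsto θ (cocompact Ω) atTop) (hφθ : φ =o[cocompact Ω] θ) {ε : ℝ} (hε : 0 < ε) :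
    BddBelow (range fun x => φ x + ε * θ x) := by
  refine bddBelow_range_of_eventually_cocompact (by fun_prop) (c := 0) ?_
  filter_upwards [hφθ.bound hε, hθ_top.eventually_ge_atTop 0] with x hx hx0
  rw [Real.norm_eq_abs, Real.norm_of_nonneg hx0] at hx
  linarith [neg_abs_le (φ x)]

end BddBelow

section MomentSublevel

variable {Ω : Type*} [MeasurableSpace Ω]

theorem lintegral_toNNReal_sub {μ : Measure Ω} [IsProbabilityMeasure μ] {φ : Ω → ℝ} {c : ℝ}
    (hφ : Integrable φ μ) (hc : ∀ x, c ≤ φ x) :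
    ∫⁻ x, (φ x - c).toNNReal ∂μ = ENNReal.ofReal (∫ x, φ x ∂μ - c) := by
  have := ofReal_integral_eq_lintegral_ofReal (hφ.sub (integrable_const c))
    (.of_forall fun x => sub_nonneg.2 (hc x))
  simpa [integral_sub hφ (integrable_const c), ENNReal.ofReal] using this.symm

/-- The probability measures `μ` with `∫ θ dμ ≤ T`. Integrability is demanded because the Bochner
integral of a non-integrable function is `0`. -/
def momentSublevel (θ : Ω → ℝ) (T : ℝ) : Set (ProbabilityMeasure Ω) :=
  {μ | Integrable θ μ ∧ ∫ x, θ x ∂μ ≤ T}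

theorem momentSublevel_eq_setOf_lintegral_le {θ : Ω → ℝ} {T : ℝ} (hθ : Measurable θ) {c : ℝ}
    (hc : ∀ x, c ≤ θ x) (hcT : c ≤ T) :
    momentSublevel θ T =
      {μ : ProbabilityMeasure Ω | ∫⁻ x, (θ x - c).toNNReal ∂μ ≤ ENNReal.ofReal (T - c)} := by
  have hle_iff {μ : ProbabilityMeasure Ω} (hμ : Integrable θ μ) :
      ∫ x, θ x ∂μ ≤ T ↔ ∫⁻ x, (θ x - c).toNNReal ∂μ ≤ ENNReal.ofReal (T - c) := by
    rw [lintegral_toNNReal_sub hμ hc, ENNReal.ofReal_le_ofReal_iff (sub_nonneg.2 hcT),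
      sub_le_sub_iff_right]
  ext μ
  refine ⟨fun hμ => (hle_iff hμ.1).1 hμ.2, fun hμ => ?_⟩
  have hsub : Integrable (fun x => θ x - c) μ :=
    (lintegral_ofReal_ne_top_iff_integrable (by fun_prop)
      (.of_forall fun x => sub_nonneg.2 (hc x))).1 (hμ.trans_lt ENNReal.ofReal_lt_top).ne
  have hint : Integrable θ μ := by simpa [sub_eq_add_neg] using hsub
  exact ⟨hint, (hle_iff hint).2 hμ⟩

end MomentSublevel

section WeakConvergence

variable {Ω : Type*} [TopologicalSpace Ω] [MeasurableSpace Ω] [OpensMeasurableSpace Ω]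

theorem lowerSemicontinuous_lintegral {φ : Ω → ℝ≥0} (hφ : Continuous φ) :
    LowerSemicontinuous fun μ : ProbabilityMeasure Ω => ∫⁻ x, φ x ∂μ := by
  let truncation (N : ℕ) : BoundedContinuousFunction Ω ℝ≥0 :=
    .mkOfBound ⟨fun x => min (φ x) N, by fun_prop⟩ N fun x y => by
      simpa using! abs_sub_le_of_nonneg_of_le (NNReal.coe_nonneg _) (min_le_right (φ x) (N : ℝ≥0))
        (NNReal.coe_nonneg _) (min_le_right (φ y) (N : ℝ≥0))
  have hmono : Monotone fun N x => (truncation N x : ℝ≥0∞) := fun N N' h x =>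
    ENNReal.coe_le_coe.2 (min_le_min_left _ (Nat.cast_le.2 h))
  have hsup (x : Ω) : (φ x : ℝ≥0∞) = ⨆ N, (truncation N x : ℝ≥0∞) := by
    refine le_antisymm ?_ (iSup_le fun N => ENNReal.coe_le_coe.2 (min_le_left _ _))
    obtain ⟨N, hN⟩ := exists_nat_ge (φ x)
    exact le_iSup_of_le N (ENNReal.coe_le_coe.2 (le_min le_rfl hN))
  have hlim (μ : ProbabilityMeasure Ω) : ∫⁻ x, φ x ∂μ = ⨆ N, ∫⁻ x, truncation N x ∂μ := by
    simp_rw [hsup]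
    exact lintegral_iSup (fun N => by fun_prop) hmono
  simp_rw [hlim]
  exact lowerSemicontinuous_iSup fun N =>
    (ProbabilityMeasure.continuous_lintegral_boundedContinuousFunction _).lowerSemicontinuous

theorem lowerSemicontinuousOn_integral {φ : Ω → ℝ} (hφ : Continuous φ)
    (hφ_bdd : BddBelow (range φ)) :
    LowerSemicontinuousOn (fun μ : ProbabilityMeasure Ω => ∫ x, φ x ∂μ) {μ | Integrable φ μ} := by
  obtain ⟨c, hc⟩ := hφ_bdd
  replace hc (x : Ω) : c ≤ φ x := hc ⟨x, rfl⟩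
  have hlt_iff {μ : ProbabilityMeasure Ω} (hμ : Integrable φ μ) {y : ℝ} (hy : c ≤ y) :
      y < ∫ x, φ x ∂μ ↔ ENNReal.ofReal (y - c) < ∫⁻ x, (φ x - c).toNNReal ∂μ := by
    rw [lintegral_toNNReal_sub hμ hc,
      ENNReal.ofReal_lt_ofReal_iff_of_nonneg (sub_nonneg.2 hy), sub_lt_sub_iff_right]
  rw [lowerSemicontinuousOn_iff]
  intro μ hμ y hy
  obtain hyc | hyc := lt_or_ge y c
  · filter_upwards [self_mem_nhdsWithin] with ν hν
    calc y < c := hyc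
      _ = ∫ _, c ∂(ν : Measure Ω) := by simp
      _ ≤ ∫ x, φ x ∂ν := integral_mono (integrable_const c) hν hc
  · have hlsc := lowerSemicontinuous_lintegral (φ := fun x => (φ x - c).toNNReal) (by fun_prop)
    filter_upwards [self_mem_nhdsWithin,
      nhdsWithin_le_nhds (hlsc μ _ ((hlt_iff hμ hyc).1 hy))] with ν hν hlt
    exact (hlt_iff hν hyc).2 hlt

theorem integrable_of_isLittleO_cocompact {φ θ : Ω → ℝ} (hφ : Continuous φ) (hθ : Continuous θ)
    (hθ_top : Tendsto θ (cocompact Ω) atTop) (hφθ : φ =o[cocompact Ω] θ) {μ : Measure Ω}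
    [IsFiniteMeasure μ] (hμ : Integrable θ μ) : Integrable φ μ := by
  obtain ⟨c, hc⟩ :=
    bddBelow_range_add_mul_of_isLittleO hφ.abs.neg hθ hθ_top hφθ.abs_left.neg_left one_pos
  refine (hμ.sub (integrable_const c)).mono' hφ.aestronglyMeasurable (.of_forall fun x => ?_)
  have : c ≤ -|φ x| + 1 * θ x := hc ⟨x, rfl⟩
  rw [Real.norm_eq_abs, Pi.sub_apply]
  linarith

theorem lowerSemicontinuousOn_integral_of_isLittleO {φ θ : Ω → ℝ} (hφ : Continuous φ)
    (hθ : Continuous θ) (hθ_top : Tendsto θ (cocompact Ω) atTop) (hφθ : φ =o[cocompact Ω] θ)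
    (T : ℝ) :
    LowerSemicontinuousOn (fun μ : ProbabilityMeasure Ω => ∫ x, φ x ∂μ) (momentSublevel θ T) := by
  have hint {μ : ProbabilityMeasure Ω} (hμ : Integrable θ μ) : Integrable φ μ :=
    integrable_of_isLittleO_cocompact hφ hθ hθ_top hφθ hμ
  rw [lowerSemicontinuousOn_iff]
  intro μ hμ y hy
  -- `φ + ε θ` is bounded below; passing to it costs at most `ε (T - ∫ θ ∂μ)`.
  obtain ⟨ε, hε, hεy⟩ := exists_pos_mul_lt (sub_pos.2 hy) (T - ∫ x, θ x ∂μ)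
  have hint_add {ν : ProbabilityMeasure Ω} (hν : Integrable θ ν) :
      Integrable (fun x => φ x + ε * θ x) ν := (hint hν).add (hν.const_mul ε)
  have hadd {ν : ProbabilityMeasure Ω} (hν : Integrable θ ν) :
      ∫ x, (φ x + ε * θ x) ∂ν = ∫ x, φ x ∂ν + ε * ∫ x, θ x ∂ν := by
    rw [integral_add (hint hν) (hν.const_mul ε), integral_const_mul]
  have hlsc := lowerSemicontinuousOn_integral (by fun_prop)
    (bddBelow_range_add_mul_of_isLittleO hφ hθ hθ_top hφθ hε)
  have hlt : y + ε * T < ∫ x, (φ x + ε * θ x) ∂μ := by rw [hadd hμ.1]; linarith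
  filter_upwards [self_mem_nhdsWithin, lowerSemicontinuousOn_iff.1
    (hlsc.mono fun ν (hν : ν ∈ momentSublevel θ T) => hint_add hν.1) μ hμ _ hlt] with ν hν hltν
  rw [hadd hν.1] at hltν
  linarith [mul_le_mul_of_nonneg_left hν.2 hε.le]

end WeakConvergence

section Compactness

variable {Ω : Type*} [TopologicalSpace Ω] [T2Space Ω] [MeasurableSpace Ω] [BorelSpace Ω]

theorem isCompact_setOf_lintegral_le {φ : Ω → ℝ≥0} (hφ : Continuous φ)
    (hφ_top : Tendsto φ (cocompact Ω) atTop) {R : ℝ≥0∞} (hR : R ≠ ∞) :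
    IsCompact {μ : ProbabilityMeasure Ω | ∫⁻ x, φ x ∂μ ≤ R} := by
  have hclosed : IsClosed {μ : ProbabilityMeasure Ω | ∫⁻ x, φ x ∂μ ≤ R} :=
    (lowerSemicontinuous_lintegral hφ).isClosed_preimage R
  rw [← hclosed.closure_eq]
  refine isCompact_closure_of_isTightMeasureSet ?_
  rw [isTightMeasureSet_iff_exists_isCompact_measure_compl_le]
  intro ε hε
  obtain ⟨N, hN⟩ := ENNReal.exists_nat_mul_gt hε.ne' hR
  obtain ⟨K, hK, hKN⟩ := mem_cocompact.1 (hφ_top.eventually_ge_atTop (N : ℝ≥0))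
  refine ⟨K, hK, ?_⟩
  rintro _ ⟨μ, hμ, rfl⟩
  have hmarkov : N * (μ : Measure Ω) Kᶜ < N * ε :=
    calc N * (μ : Measure Ω) Kᶜ
      _ ≤ N * (μ : Measure Ω) {x | (N : ℝ≥0∞) ≤ φ x} := by
        gcongr
        exact fun x hx => by exact_mod_cast hKN hx
      _ ≤ ∫⁻ x, φ x ∂μ := mul_meas_ge_le_lintegral (by fun_prop) _
      _ ≤ R := hμ
      _ < N * ε := hN
  exact (lt_of_mul_lt_mul_left' hmarkov).le

theorem isCompact_momentSublevel {θ : Ω → ℝ} (hθ : Continuous θ)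
    (hθ_top : Tendsto θ (cocompact Ω) atTop) (T : ℝ) : IsCompact (momentSublevel θ T) := by
  obtain ⟨c, hc⟩ :=
    bddBelow_range_of_eventually_cocompact hθ (hθ_top.eventually_ge_atTop 0)
  have hc' (x : Ω) : min c T ≤ θ x := (min_le_left _ _).trans (hc ⟨x, rfl⟩)
  rw [momentSublevel_eq_setOf_lintegral_le hθ.measurable hc' (min_le_right _ _)]
  refine isCompact_setOf_lintegral_le (by fun_prop) ?_ ENNReal.ofReal_ne_top
  exact tendsto_real_toNNReal_atTop.comp (tendsto_atTop_add_const_right _ _ hθ_top)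

end Compactness

section MomentSet

variable {Ω E : Type*} [MeasurableSpace Ω] [NormedAddCommGroup E] [NormedSpace ℝ E]

/-- The moment vectors `∫ φ dμ` of all probability measures `μ` integrating `φ`. -/
def momentSet (φ : Ω → E) : Set E :=
  (fun μ : ProbabilityMeasure Ω => ∫ x, φ x ∂μ) '' {μ | Integrable φ μ}

theorem apply_mem_momentSet [CompleteSpace E] {φ : Ω → E} (hφ : StronglyMeasurable φ) (x : Ω) :
    φ x ∈ momentSet φ :=
  ⟨diracProba x, integrable_dirac' hφ (by simp), integral_dirac' φ x hφ⟩

theorem convex_momentSet (φ : Ω → E) : Convex ℝ (momentSet φ) := by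
  rintro _ ⟨μ, hμ, rfl⟩ _ ⟨ν, hν, rfl⟩ a b ha hb hab
  have hmass : (a.toNNReal + b.toNNReal : ℝ≥0∞) = 1 := by
    rw [← ENNReal.coe_add, ← Real.toNNReal_add ha hb, hab, Real.toNNReal_one, ENNReal.coe_one]
  have hμ' : Integrable φ (a.toNNReal • (μ : Measure Ω)) := hμ.smul_measure_nnreal
  have hν' : Integrable φ (b.toNNReal • (ν : Measure Ω)) := hν.smul_measure_nnreal
  refine ⟨⟨a.toNNReal • (μ : Measure Ω) + b.toNNReal • (ν : Measure Ω), ⟨?_⟩⟩,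
    hμ'.add_measure hν', ?_⟩
  · simpa only [Measure.coe_add, Measure.coe_nnreal_smul_apply, Pi.add_apply, measure_univ,
      mul_one] using hmass
  · simp [integral_add_measure hμ' hν', integral_smul_nnreal_measure, NNReal.smul_def, ha, hb]

end MomentSet

section Feasible

variable {Ω ι : Type*} [MeasurableSpace Ω] {θ : Ω → ℝ} {h : ι → Ω → ℝ} {R : ℝ}

/-- The primal feasible set of the moment problem: probability measures with `∫ θ dμ ≤ R` and
`∫ h j dμ ≤ 0` for every `j`. Integrability of `h j` is not part of the definition: it follows from
that of `θ` once `h j = o(θ)`. -/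
def momentFeasible (θ : Ω → ℝ) (h : ι → Ω → ℝ) (R : ℝ) : Set (ProbabilityMeasure Ω) :=
  momentSublevel θ R ∩ {μ | ∀ j, ∫ x, h j x ∂μ ≤ 0}

theorem diracProba_mem_momentFeasible (hθ : StronglyMeasurable θ)
    (hh : ∀ j, StronglyMeasurable (h j)) {x : Ω} (hθx : θ x ≤ R) (hhx : ∀ j, h j x ≤ 0) :
    diracProba x ∈ momentFeasible θ h R := by
  refine ⟨⟨integrable_dirac' hθ (by simp), ?_⟩, fun j => ?_⟩
  · exact (integral_dirac' θ x hθ).trans_le hθx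
  · exact (integral_dirac' (h j) x (hh j)).trans_le (hhx j)

theorem isCompact_momentFeasible [TopologicalSpace Ω] [T2Space Ω] [BorelSpace Ω]
    (hθ : Continuous θ) (hh : ∀ j, Continuous (h j)) (hθ_top : Tendsto θ (cocompact Ω) atTop)
    (hhθ : ∀ j, h j =o[cocompact Ω] θ) : IsCompact (momentFeasible θ h R) := by
  have hclosed : IsClosed {μ : momentSublevel θ R | ∀ j, ∫ x, h j x ∂(μ : Measure Ω) ≤ 0} := by
    rw [ofPred_forall]
    exact isClosed_iInter fun j => (lowerSemicontinuous_restrict_iff.2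
      (lowerSemicontinuousOn_integral_of_isLittleO (hh j) hθ hθ_top (hhθ j) R)).isClosed_preimage 0
  have := isCompact_iff_compactSpace.1 (isCompact_momentSublevel hθ hθ_top R)
  rw [momentFeasible, ← Subtype.image_preimage_coe]
  exact hclosed.isCompact.image continuous_subtype_val

end Feasible

section Dual

variable {Ω ι : Type*} [Fintype ι] {f θ : Ω → ℝ} {h : ι → Ω → ℝ} {R : ℝ}

/-- The objective values `γ - δ R` of the triples `(lam, δ, γ)` which are feasible for the dual of
the moment problem. -/
def momentDualValues (f θ : Ω → ℝ) (h : ι → Ω → ℝ) (R : ℝ) : Set ℝ :=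
  {v | ∃ (lam : ι → ℝ) (δ γ : ℝ), (∀ j, 0 ≤ lam j) ∧ 0 ≤ δ ∧
    (∀ x, γ ≤ f x + δ * θ x + ∑ j, lam j * h j x) ∧ v = γ - δ * R}

theorem mem_momentDualValues_of_strongDual {q : ℝ} {Λ : StrongDual ℝ (ℝ × (ι → ℝ))}
    (hΛ : ∀ z, 0 ≤ z → 0 ≤ Λ z)
    (hq : ∀ x, q + Λ (R, 0) ≤ f x + Λ (θ x, fun j => h j x)) :
    q ∈ momentDualValues f θ h R := by
  classical
  have hΛ_apply (t : ℝ) (c : ι → ℝ) :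
      Λ (t, c) = Λ (1, 0) * t + ∑ j, Λ (0, Pi.single j 1) * c j := by
    have hc : (t, c) = t • ((1 : ℝ), (0 : ι → ℝ)) + ∑ j, c j • (0, Pi.single j 1) := by
      ext i <;> simp [Prod.fst_sum, Prod.snd_sum, Finset.sum_apply, Pi.single_apply]
    rw [hc]
    simp only [map_add, map_sum, map_smul, smul_eq_mul, mul_comm]
  refine ⟨fun j => Λ (0, Pi.single j 1), Λ (1, 0), q + Λ (1, 0) * R,
    fun j => hΛ _ ⟨le_rfl, by simp⟩, hΛ _ ⟨zero_le_one, le_rfl⟩, fun x => ?_, by ring⟩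
  simpa [hΛ_apply (θ x), hΛ_apply R, add_assoc] using hq x

theorem le_integral_of_mem_momentDualValues [MeasurableSpace Ω] {v : ℝ}
    (hv : v ∈ momentDualValues f θ h R) {μ : ProbabilityMeasure Ω} (hμ : μ ∈ momentFeasible θ h R)
    (hf : Integrable f μ) (hh : ∀ j, Integrable (h j) μ) : v ≤ ∫ x, f x ∂μ := by
  obtain ⟨lam, δ, γ, hlam, hδ, hγ, rfl⟩ := hv
  obtain ⟨⟨hθ, hθR⟩, hh0⟩ := hμ
  have hfθ : Integrable (fun x => f x + δ * θ x) μ := hf.add (hθ.const_mul δ)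
  have hsum : Integrable (fun x => ∑ j, lam j * h j x) μ :=
    integrable_finsetSum Finset.univ fun j _ => (hh j).const_mul (lam j)
  have hlagrange : γ ≤ ∫ x, f x ∂μ + δ * ∫ x, θ x ∂μ + ∑ j, lam j * ∫ x, h j x ∂μ :=
    calc γ = ∫ _, γ ∂(μ : Measure Ω) := by simp
      _ ≤ ∫ x, (f x + δ * θ x + ∑ j, lam j * h j x) ∂μ :=
        integral_mono (integrable_const γ) (hfθ.add hsum) hγ
      _ = _ := by
        rw [integral_add hfθ hsum, integral_add hf (hθ.const_mul δ), integral_const_mul,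
          integral_finsetSum _ fun j _ => (hh j).const_mul (lam j)]
        simp_rw [integral_const_mul]
  have hδR := mul_le_mul_of_nonneg_left hθR hδ
  have hh_nonpos : ∑ j, lam j * ∫ x, h j x ∂μ ≤ 0 :=
    Finset.sum_nonpos fun j _ => mul_nonpos_of_nonneg_of_nonpos (hlam j) (hh0 j)
  linarith

end Dual

section MomentMap

variable {Ω ι : Type*} {f θ : Ω → ℝ} {h : ι → Ω → ℝ} {R : ℝ}

/-- The function whose integrals are the moments entering the moment problem. -/
def momentMap (f θ : Ω → ℝ) (h : ι → Ω → ℝ) (x : Ω) : ℝ × ℝ × (ι → ℝ) :=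
  (f x, θ x, fun j => h j x)

variable [Fintype ι] [MeasurableSpace Ω]

theorem integrable_momentMap_iff {μ : Measure Ω} :
    Integrable (momentMap f θ h) μ ↔
      Integrable f μ ∧ Integrable θ μ ∧ ∀ j, Integrable (h j) μ :=
  integrable_prod.trans
    (and_congr_right' (integrable_prod.trans (and_congr_right' integrable_pi_iff)))

theorem integral_momentMap {μ : Measure Ω} (hf : Integrable f μ)
    (hθ : Integrable θ μ) (hh : ∀ j, Integrable (h j) μ) :
    ∫ x, momentMap f θ h x ∂μ = (∫ x, f x ∂μ, ∫ x, θ x ∂μ, fun j => ∫ x, h j x ∂μ) := by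
  have hh' : Integrable (fun x j => h j x) μ := .of_eval hh
  simp only [momentMap]
  rw [integral_pair hf (hθ.prodMk hh'), integral_pair hθ hh']
  congr 2
  ext j
  exact eval_integral hh j

theorem integral_momentMap_snd_le_iff {μ : ProbabilityMeasure Ω}
    (hμ : Integrable (momentMap f θ h) μ) :
    (∫ x, momentMap f θ h x ∂μ).2 ≤ (R, 0) ↔ μ ∈ momentFeasible θ h R := by
  obtain ⟨hμf, hμθ, hμh⟩ := integrable_momentMap_iff.1 hμ
  simp [integral_momentMap hμf hμθ hμh, momentFeasible, momentSublevel, hμθ, Prod.le_def,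
    Pi.le_def]

variable [TopologicalSpace Ω]

theorem integrable_momentMap [OpensMeasurableSpace Ω] (hf : Continuous f)
    (hθ : Continuous θ) (hh : ∀ j, Continuous (h j))
    (hθ_top : Tendsto θ (cocompact Ω) atTop) (hfθ : f =o[cocompact Ω] θ)
    (hhθ : ∀ j, h j =o[cocompact Ω] θ) {μ : Measure Ω} [IsFiniteMeasure μ] (hμ : Integrable θ μ) :
    Integrable (momentMap f θ h) μ :=
  integrable_momentMap_iff.2 ⟨integrable_of_isLittleO_cocompact hf hθ hθ_top hfθ hμ, hμ,
    fun j => integrable_of_isLittleO_cocompact (hh j) hθ hθ_top (hhθ j) hμ⟩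

theorem isClosed_epigraph_integral_momentMap [OpensMeasurableSpace Ω] (hf : Continuous f)
    (hθ : Continuous θ) (hh : ∀ j, Continuous (h j))
    (hθ_top : Tendsto θ (cocompact Ω) atTop) (hfθ : f =o[cocompact Ω] θ)
    (hhθ : ∀ j, h j =o[cocompact Ω] θ) (T : ℝ) :
    IsClosed {p : momentSublevel θ T × (ℝ × ℝ × (ι → ℝ)) |
      ∫ x, momentMap f θ h x ∂(p.1 : ProbabilityMeasure Ω) ≤ p.2} := by
  have hepi {φ : Ω → ℝ} (hφ : LowerSemicontinuousOn
      (fun μ : ProbabilityMeasure Ω => ∫ x, φ x ∂(μ : Measure Ω)) (momentSublevel θ T))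
      {c : ℝ × ℝ × (ι → ℝ) → ℝ} (hc : Continuous c) :
      IsClosed {p : momentSublevel θ T × (ℝ × ℝ × (ι → ℝ)) |
        ∫ x, φ x ∂(p.1 : Measure Ω) ≤ c p.2} :=
    (lowerSemicontinuous_restrict_iff.2 hφ).isClosed_epigraph.preimage (continuous_id.prodMap hc)
  have hlsc_θ := (lowerSemicontinuousOn_integral hθ (bddBelow_range_of_eventually_cocompact hθ
    (hθ_top.eventually_ge_atTop 0))).mono fun μ (hμ : μ ∈ momentSublevel θ T) => hμ.1
  have hlsc_h (j : ι) := lowerSemicontinuousOn_integral_of_isLittleO (hh j) hθ hθ_top (hhθ j) T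
  convert ((hepi (lowerSemicontinuousOn_integral_of_isLittleO hf hθ hθ_top hfθ T)
    continuous_fst).inter (hepi hlsc_θ (continuous_fst.comp continuous_snd))).inter
      (isClosed_iInter fun j => hepi (hlsc_h j) ((continuous_apply j).comp
        (continuous_snd.comp continuous_snd))) using 1
  ext ⟨⟨μ, hμ⟩, w⟩
  obtain ⟨hμf, hμθ, hμh⟩ :=
    integrable_momentMap_iff.1 (integrable_momentMap hf hθ hh hθ_top hfθ hhθ hμ.1)
  simp [integral_momentMap hμf hμθ hμh, Prod.le_def, Pi.le_def, and_assoc]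

variable [T2Space Ω] [BorelSpace Ω]

theorem isClosed_upperClosure_momentSet (hf : Continuous f) (hθ : Continuous θ)
    (hh : ∀ j, Continuous (h j)) (hθ_top : Tendsto θ (cocompact Ω) atTop)
    (hfθ : f =o[cocompact Ω] θ) (hhθ : ∀ j, h j =o[cocompact Ω] θ) :
    IsClosed (upperClosure (momentSet (momentMap f θ h)) : Set (ℝ × ℝ × (ι → ℝ))) := by
  refine isClosed_of_closure_subset fun z hz => ?_
  set T := z.2.1 + 1
  set moments : ProbabilityMeasure Ω → ℝ × ℝ × (ι → ℝ) := fun μ => ∫ x, momentMap f θ h x ∂μ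
  have hclosed := isClosed_upperClosure_image (F := moments)
    (isCompact_momentSublevel hθ hθ_top T)
    (isClosed_epigraph_integral_momentMap hf hθ hh hθ_top hfθ hhθ T)
  have htrunc : {w : ℝ × ℝ × (ι → ℝ) | w.2.1 < T} ∩ upperClosure (momentSet (momentMap f θ h)) ⊆
      upperClosure (moments '' momentSublevel θ T) := by
    rintro w ⟨hwT, _, ⟨μ, hμ, rfl⟩, hμw⟩
    obtain ⟨hμf, hμθ, hμh⟩ := integrable_momentMap_iff.1 hμ
    have hθw : ∫ x, θ x ∂μ ≤ w.2.1 := by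
      simpa [integral_momentMap hμf hμθ hμh] using hμw.2.1
    exact ⟨_, ⟨μ, ⟨hμθ, hθw.trans hwT.le⟩, rfl⟩, hμw⟩
  have hopen : IsOpen {w : ℝ × ℝ × (ι → ℝ) | w.2.1 < T} :=
    isOpen_lt (by fun_prop) continuous_const
  have hzT : z ∈ {w : ℝ × ℝ × (ι → ℝ) | w.2.1 < T} := lt_add_one z.2.1
  obtain ⟨_, ⟨μ, hμ, rfl⟩, hμz⟩ :=
    closure_minimal htrunc hclosed (hopen.inter_closure ⟨hzT, hz⟩)
  exact ⟨_, ⟨μ, integrable_momentMap hf hθ hh hθ_top hfθ hhθ hμ.1, rfl⟩, hμz⟩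

end MomentMap

section StrongDuality

variable {Ω ι : Type*} [TopologicalSpace Ω] [T2Space Ω] [MeasurableSpace Ω] [BorelSpace Ω]
  [Fintype ι] {f θ : Ω → ℝ} {h : ι → Ω → ℝ} {R : ℝ}

theorem mem_momentDualValues_of_lt (hf : Continuous f) (hθ : Continuous θ)
    (hh : ∀ j, Continuous (h j)) (hθ_top : Tendsto θ (cocompact Ω) atTop)
    (hfθ : f =o[cocompact Ω] θ) (hhθ : ∀ j, h j =o[cocompact Ω] θ)
    (hne : (momentFeasible θ h R).Nonempty) {q : ℝ}
    (hq : ∀ μ ∈ momentFeasible θ h R, q < ∫ x, f x ∂μ) : q ∈ momentDualValues f θ h R := by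
  have hfeasible : ∃ p ∈ momentSet (momentMap f θ h), p.2 ≤ (R, 0) := by
    obtain ⟨μ, hμ⟩ := hne
    have hint := integrable_momentMap hf hθ hh hθ_top hfθ hhθ hμ.1.1
    exact ⟨_, ⟨μ, hint, rfl⟩, (integral_momentMap_snd_le_iff hint).2 hμ⟩
  have hvalue : ∀ p ∈ momentSet (momentMap f θ h), p.2 ≤ (R, 0) → q < p.1 := by
    rintro _ ⟨μ, hμ, rfl⟩ hμR
    obtain ⟨hμf, hμθ, hμh⟩ := integrable_momentMap_iff.1 hμ
    simpa [integral_momentMap hμf hμθ hμh] using hq μ ((integral_momentMap_snd_le_iff hμ).1 hμR)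
  obtain ⟨Λ, hΛ, hqΛ⟩ := exists_lagrange_multiplier (convex_momentSet (momentMap f θ h))
    (isClosed_upperClosure_momentSet hf hθ hh hθ_top hfθ hhθ) hfeasible hvalue
  have hcont : Continuous (momentMap f θ h) := hf.prodMk (hθ.prodMk (continuous_pi hh))
  exact mem_momentDualValues_of_strongDual hΛ fun x =>
    hqΛ _ (apply_mem_momentSet hcont.stronglyMeasurable x)

theorem strong_duality_momentProblem_general (hf : Continuous f) (hθ : Continuous θ)
    (hh : ∀ j, Continuous (h j)) (hθ_top : Tendsto θ (cocompact Ω) atTop)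
    (hfθ : f =o[cocompact Ω] θ) (hhθ : ∀ j, h j =o[cocompact Ω] θ)
    (hne : (momentFeasible θ h R).Nonempty) :
    ∃ μstar ∈ momentFeasible θ h R,
      (∀ μ ∈ momentFeasible θ h R, ∫ x, f x ∂μstar ≤ ∫ x, f x ∂μ) ∧
      IsLUB (momentDualValues f θ h R) (∫ x, f x ∂μstar) := by
  obtain ⟨μstar, hμstar, hmin⟩ := LowerSemicontinuousOn.exists_isMinOn hne
    (isCompact_momentFeasible hθ hh hθ_top hhθ)
    ((lowerSemicontinuousOn_integral_of_isLittleO hf hθ hθ_top hfθ R).mono inter_subset_left)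
  have hint {φ : Ω → ℝ} (hφ : Continuous φ) (hφθ : φ =o[cocompact Ω] θ) : Integrable φ μstar :=
    integrable_of_isLittleO_cocompact hφ hθ hθ_top hφθ hμstar.1.1
  refine ⟨μstar, hμstar, fun μ hμ => hmin hμ, fun v hv => ?_, fun u hu => ?_⟩
  · exact le_integral_of_mem_momentDualValues hv hμstar (hint hf hfθ) fun j =>
      hint (hh j) (hhθ j)
  · refine le_of_forall_lt_imp_le_of_dense fun q hq => hu ?_
    exact mem_momentDualValues_of_lt hf hθ hh hθ_top hfθ hhθ hne fun μ hμ => hq.trans_le (hmin hμ)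

end StrongDuality

section PolynomialGrowth

variable {σ 𝕜 : Type*} [Fintype σ] [NormedCommRing 𝕜] [NormOneClass 𝕜]

theorem norm_eval_le_mul_norm_pow_totalDegree (p : MvPolynomial σ 𝕜) {x : σ → 𝕜}
    (hx : 1 ≤ ‖x‖) :
    ‖eval x p‖ ≤ (∑ a ∈ p.support, ‖p.coeff a‖) * ‖x‖ ^ p.totalDegree := by
  have hmonomial (a : σ →₀ ℕ) (ha : a ∈ p.support) :
      ‖∏ i, x i ^ a i‖ ≤ ‖x‖ ^ p.totalDegree :=
    calc ‖∏ i, x i ^ a i‖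
      _ ≤ ∏ i, ‖x i ^ a i‖ := Finset.norm_prod_le Finset.univ fun i => x i ^ a i
      _ ≤ ∏ i, ‖x‖ ^ a i := by
        gcongr with i
        exact (norm_pow_le _ _).trans (by gcongr; exact norm_le_pi_norm x i)
      _ = ‖x‖ ^ ∑ i, a i := Finset.prod_pow_eq_pow_sum _ _ _
      _ ≤ ‖x‖ ^ p.totalDegree := pow_le_pow_right₀ hx <| by
        simpa [Finsupp.sum_fintype] using le_totalDegree ha
  rw [eval_eq', Finset.sum_mul]
  refine norm_sum_le_of_le _ fun a ha => (norm_mul_le _ _).trans ?_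
  gcongr
  exact hmonomial a ha

theorem isLittleO_eval_norm_pow_cobounded {p : MvPolynomial σ 𝕜} {d : ℕ}
    (hp : p.totalDegree < d) :
    (fun x : σ → 𝕜 => eval x p) =o[Bornology.cobounded (σ → 𝕜)] fun x => ‖x‖ ^ d := by
  have hbigO : (fun x : σ → 𝕜 => eval x p) =O[Bornology.cobounded (σ → 𝕜)]
      fun x => ‖x‖ ^ p.totalDegree := by
    refine .of_bound (∑ a ∈ p.support, ‖p.coeff a‖) ?_
    filter_upwards [tendsto_norm_cobounded_atTop.eventually_ge_atTop 1] with x hx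
    rw [norm_pow, norm_norm]
    exact norm_eval_le_mul_norm_pow_totalDegree p hx
  exact hbigO.trans_isLittleO
    ((isLittleO_pow_pow_atTop_of_lt hp).comp_tendsto tendsto_norm_cobounded_atTop)

end PolynomialGrowth

section Theta

variable {n r : ℕ}

theorem eval_theta (x : Fin n → ℝ) :
    eval x (theta n r) =
      ∑ i, ∑ k ∈ Finset.range (r + 1), (x i ^ 2) ^ k / (k.factorial : ℝ) := by
  rw [Finset.sum_comm]
  simp [theta, pow_mul, div_eq_inv_mul]

theorem eval_theta_le {M : ℝ} {x : Fin n → ℝ} (hx : ‖x‖ ≤ M) :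
    eval x (theta n r) ≤ n * Real.exp (M ^ 2) := by
  have hexp (i : Fin n) :
      ∑ k ∈ Finset.range (r + 1), (x i ^ 2) ^ k / (k.factorial : ℝ) ≤ Real.exp (M ^ 2) := by
    have hxi : |x i| ≤ M := (norm_le_pi_norm x i).trans hx
    calc ∑ k ∈ Finset.range (r + 1), (x i ^ 2) ^ k / (k.factorial : ℝ)
      _ ≤ Real.exp (x i ^ 2) := Real.sum_le_exp_of_nonneg (sq_nonneg _) _
      _ ≤ Real.exp (M ^ 2) := Real.exp_le_exp.2 (sq_le_sq.2 (hxi.trans (le_abs_self M)))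
  simpa [eval_theta] using Finset.sum_le_sum fun i (_ : i ∈ Finset.univ) => hexp i

theorem norm_pow_le_factorial_mul_eval_theta (hr : r ≠ 0) (x : Fin n → ℝ) :
    ‖x‖ ^ (2 * r) ≤ r.factorial * eval x (theta n r) := by
  have hfact : (0 : ℝ) < r.factorial := by exact_mod_cast r.factorial_pos
  rw [eval_theta]
  obtain _ | _ := isEmpty_or_nonempty (Fin n)
  · simp [Subsingleton.elim x 0, hr]
  obtain ⟨i, hi⟩ := Finite.exists_max fun i => ‖x i‖
  have hnorm : ‖x‖ ≤ ‖x i‖ := (pi_norm_le_iff_of_nonneg (norm_nonneg _)).2 hi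
  rw [← div_le_iff₀' hfact]
  calc ‖x‖ ^ (2 * r) / r.factorial
    _ ≤ (x i ^ 2) ^ r / r.factorial := by
      rw [pow_mul, ← sq_abs (x i)]
      gcongr
      exact hnorm
    _ ≤ ∑ k ∈ Finset.range (r + 1), (x i ^ 2) ^ k / (k.factorial : ℝ) :=
      Finset.single_le_sum (f := fun k => (x i ^ 2) ^ k / (k.factorial : ℝ))
        (fun k _ => by positivity) (Finset.self_mem_range_succ r)
    _ ≤ ∑ i, ∑ k ∈ Finset.range (r + 1), (x i ^ 2) ^ k / (k.factorial : ℝ) :=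
      Finset.single_le_sum
        (f := fun i => ∑ k ∈ Finset.range (r + 1), (x i ^ 2) ^ k / (k.factorial : ℝ))
        (fun i _ => by positivity) (Finset.mem_univ i)

theorem tendsto_eval_theta_cocompact (hr : r ≠ 0) :
    Tendsto (fun x => eval x (theta n r)) (cocompact (Fin n → ℝ)) atTop := by
  have hfact : (0 : ℝ) < r.factorial := by exact_mod_cast r.factorial_pos
  have hpow : Tendsto (fun x : Fin n → ℝ => ‖x‖ ^ (2 * r)) (cocompact _) atTop :=
    (tendsto_pow_atTop (by omega)).comp tendsto_norm_cocompact_atTop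
  exact (tendsto_const_mul_atTop_of_pos hfact).1
    (tendsto_atTop_mono (norm_pow_le_factorial_mul_eval_theta hr) hpow)

theorem isLittleO_eval_eval_theta {p : MvPolynomial (Fin n) ℝ} (hp : p.totalDegree < 2 * r) :
    (fun x => eval x p) =o[cocompact (Fin n → ℝ)] fun x => eval x (theta n r) := by
  have htheta : (fun x : Fin n → ℝ => ‖x‖ ^ (2 * r)) =O[cocompact (Fin n → ℝ)]
      fun x => eval x (theta n r) := by
    refine .of_bound r.factorial (.of_forall fun x => ?_)
    rw [norm_pow, norm_norm]
    refine (norm_pow_le_factorial_mul_eval_theta (by omega) x).trans ?_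
    gcongr
    exact le_abs_self _
  rw [← Metric.cobounded_eq_cocompact] at htheta ⊢
  exact (isLittleO_eval_norm_pow_cobounded hp).trans_isBigO htheta

theorem isLittleO_eval_sq_eval_theta {p : MvPolynomial (Fin n) ℝ}
    (hp : (p ^ 2).totalDegree < 2 * r) :
    (fun x => eval x p ^ 2) =o[cocompact (Fin n → ℝ)] fun x => eval x (theta n r) := by
  simpa using isLittleO_eval_eval_theta hp

end Theta

theorem pFeas_iff_mem_momentFeasible {n m : ℕ} {g : Fin m → MvPolynomial (Fin n) ℝ}
    {f : MvPolynomial (Fin n) ℝ} {r : ℕ} {M : ℝ} (hdf : f.totalDegree < 2 * r)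
    (hdg : ∀ j, ((g j) ^ 2).totalDegree < 2 * r) {μ : Measure (Fin n → ℝ)} :
    PFeas n m g f r M μ ↔
      ∃ ν ∈ momentFeasible (fun x => eval x (theta n r)) (fun j x => eval x (g j) ^ 2)
        (n * Real.exp (M ^ 2)), (ν : Measure (Fin n → ℝ)) = μ := by
  constructor
  · rintro ⟨hμ, -, hθ, -, hg, hθR⟩
    exact ⟨⟨μ, hμ⟩, ⟨⟨hθ, hθR⟩, hg⟩, rfl⟩
  · rintro ⟨ν, ⟨⟨hθ, hθR⟩, hg⟩, rfl⟩
    have hint {φ : (Fin n → ℝ) → ℝ} (hφ : Continuous φ)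
        (hφθ : φ =o[cocompact _] fun x => eval x (theta n r)) : Integrable φ ν :=
      integrable_of_isLittleO_cocompact hφ (continuous_eval _)
        (tendsto_eval_theta_cocompact (by omega)) hφθ hθ
    exact ⟨inferInstance, hint (continuous_eval f) (isLittleO_eval_eval_theta hdf), hθ,
      fun j => hint ((continuous_eval (g j)).pow 2) (isLittleO_eval_sq_eval_theta (hdg j)), hg,
      hθR⟩

theorem strong_duality_momentProblem (n m : ℕ)
    (g : Fin m → MvPolynomial (Fin n) ℝ) (f : MvPolynomial (Fin n) ℝ)
    (r : ℕ) (M : ℝ) (hM : 0 < M)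
    (hne : ∃ x : Fin n → ℝ, ‖x‖ ≤ M ∧ ∀ j, eval x (g j) = 0)
    (hdf : f.totalDegree < 2 * r) (hdg : ∀ j, ((g j) ^ 2).totalDegree < 2 * r) :
    ∃ μstar : Measure (Fin n → ℝ), PFeas n m g f r M μstar ∧
      (∀ μ : Measure (Fin n → ℝ), PFeas n m g f r M μ →
        (∫ x, eval x f ∂μstar) ≤ ∫ x, eval x f ∂μ) ∧
      (∫ x, eval x f ∂μstar) =
        sSup {v | ∃ (lam : Fin m → ℝ) (δ γ : ℝ), (∀ j, 0 ≤ lam j) ∧ 0 ≤ δ ∧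
          (∀ x : Fin n → ℝ,
            γ ≤ eval x f + δ * eval x (theta n r) + ∑ j, lam j * (eval x (g j)) ^ 2) ∧
          v = γ - (n : ℝ) * δ * Real.exp (M ^ 2)} := by
  have hθ := continuous_eval (theta n r)
  have hg (j : Fin m) : Continuous fun x => eval x (g j) ^ 2 := (continuous_eval (g j)).pow 2
  obtain ⟨x₀, hx₀, hgx₀⟩ := hne
  have hx₀_feasible := diracProba_mem_momentFeasible (x := x₀) hθ.stronglyMeasurable
    (fun j => (hg j).stronglyMeasurable) (eval_theta_le hx₀) fun j => by simp [hgx₀ j]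
  obtain ⟨μstar, hμstar, hmin, hlub⟩ := strong_duality_momentProblem_general (continuous_eval f) hθ
    hg (tendsto_eval_theta_cocompact (by omega)) (isLittleO_eval_eval_theta hdf)
    (fun j => isLittleO_eval_sq_eval_theta (hdg j)) ⟨_, hx₀_feasible⟩
  simp only [pFeas_iff_mem_momentFeasible hdf hdg]
  refine ⟨μstar, ⟨μstar, hμstar, rfl⟩, ?_, ?_⟩
  · rintro _ ⟨μ, hμ, rfl⟩
    exact hmin μ hμ
  · simpa only [momentDualValues, mul_left_comm, mul_assoc] using
      (hlub.csSup_eq hlub.nonempty).symm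
end
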